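/- arXiv:2403.17955 — 2 statements merged into one kernel-verified Lean document; each statement's English description precedes it below -/
import Mathlib

section
/- Let $m_0$ be a nonzero integer and let $r \geq 1$. Suppose the elliptic curve $E' : Y^2 = X^3 - 432 m_0^2$ over $\mathbb{Q}$ has Mordell–Weil rank at least $r$, in the sense that there exists an injective group homomorphism from $\mathbb{Z}^r$ into the group of rational points of $E'$. Then there exists a constant $c > 0$ such that for every real number $B$ there exists an integer $m$ with $|m| > B$ and $N_f(m) > c \cdot (\log |m|)^{r/(r+2)}$. -/
/-- `N_f(m)`: the number of pairs `(x, y) ∈ ℤ²` with `x³ + y³ = m`. -/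
noncomputable def Nf (m : ℤ) : ℕ :=
  Set.ncard {p : ℤ × ℤ | p.1 ^ 3 + p.2 ^ 3 = m}

/-- The Weierstrass curve `Y² = X³ - 432 m₀²` over `ℚ`. -/
def Eprime (m0 : ℤ) : WeierstrassCurve.Affine ℚ :=
  { a₁ := 0, a₂ := 0, a₃ := 0, a₄ := 0, a₆ := -432 * (m0 : ℚ) ^ 2 }

/-!
On any Weierstrass curve the symmetric functions of `x(P + Q)` and `x(P - Q)` are quadratic forms in
those of `x(P)` and `x(Q)`, so the naive height satisfies
`h(P + Q) + h(P - Q) ≤ 2 h(P) + 2 h(Q) + O(1)` and hence grows at most quadratically along an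
embedded `ℤ^r`. The `N ^ r` points with coordinates in `[1, N]` therefore give `N ^ r` rational
solutions of `x³ + y³ = m₀` whose denominators have logarithm `O(N²)`. If `d` is the product of
these denominators, then `m = m₀ d³` has at least `N ^ r` integral representations, while
`log |m| = O(N ^ (r + 2))`. Finally `N_f(m) ≤ (4 |m| + 1)²`, because `x + y` divides `m`, so
`|m| → ∞` as `N → ∞`.
-/

section NaiveHeight

open WeierstrassCurve WeierstrassCurve.Affine Height

theorem eval_addSubMap {R : Type*} [CommRing R] (W : WeierstrassCurve R) (s t u : R) :
    (fun i ↦ (addSubMap W i).eval ![s, t, u]) =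
      ![s ^ 2 - W.b₄ * s * u - W.b₆ * t * u - W.b₈ * u ^ 2,
        2 * t * s + W.b₂ * s * u + W.b₄ * t * u + W.b₆ * u ^ 2,
        t ^ 2 - 4 * s * u] := by
  ext i
  fin_cases i <;> simp [addSubMap]

variable {K : Type*} [Field K] {W : Affine K}

section Height

variable [AdmissibleAbsValues K]

/-- The naive logarithmic height of a point: the height of `(x : 1)`, or of `(1 : 0)` at `0`. -/
noncomputable def naiveHeight (P : W.Point) : ℝ :=
  logHeight P.xRep

theorem naiveHeight_nonneg (P : W.Point) : 0 ≤ naiveHeight P :=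
  logHeight_nonneg _

variable (W) in
theorem exists_abs_logHeight_sym2x_sub_le :
    ∃ C, ∀ P Q : W.Point,
      |logHeight (P.sym2x Q) - (naiveHeight P + naiveHeight Q)| ≤ C := by
  obtain ⟨C, hC⟩ := abs_logHeight_sym2_sub_le K
  have xRep_eq (P : W.Point) : ![P.xRep 0, P.xRep 1] = P.xRep := by
    cases P <;> rfl
  refine ⟨C, fun P Q ↦ ?_⟩
  have h := @hC (P.xRep 0) (P.xRep 1) (Q.xRep 0) (Q.xRep 1)
  rw [xRep_eq, xRep_eq] at h
  exact h P.xRep_ne_zero Q.xRep_ne_zero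

end Height

variable [DecidableEq K]

theorem eval_addSubMap_sym2x_self_of_Y_eq {x y : K} (h : W.Nonsingular x y) (hy : y = W.negY x y) :
    (fun i ↦ (addSubMap W i).eval ((Point.some x y h).sym2x (Point.some x y h))) =
      (3 * x ^ 2 + 2 * W.a₂ * x + W.a₄ - W.a₁ * y) ^ 2 •
        (Point.some x y h + Point.some x y h).sym2x 0 := by
  have e := (equation_iff _ _).mp h.1
  rw [Point.add_self_of_Y_eq hy, Point.sym2x_some_some, Point.sym2x_zero_zero, eval_addSubMap]
  simp only [negY, b₂, b₄, b₆, b₈, Matrix.smul_cons, smul_eq_mul, Matrix.smul_empty,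
    Matrix.vecCons_inj, and_true] at hy ⊢
  refine ⟨?_, ?_, ?_⟩ <;> grind

theorem eval_addSubMap_sym2x_self_of_Y_ne {x y : K} (h : W.Nonsingular x y) (hy : y ≠ W.negY x y) :
    (fun i ↦ (addSubMap W i).eval ((Point.some x y h).sym2x (Point.some x y h))) =
      (y - W.negY x y) ^ 2 • (Point.some x y h + Point.some x y h).sym2x 0 := by
  have e := (equation_iff _ _).mp h.1
  have hslope := (div_eq_iff (sub_ne_zero.mpr hy)).mp (slope_of_Y_ne rfl hy).symm
  rw [Point.add_self_of_Y_ne hy, Point.sym2x_some_some, Point.sym2x_some_zero, eval_addSubMap]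
  generalize W.slope x x y y = ℓ at hslope ⊢
  simp only [addX, negY, b₂, b₄, b₆, b₈, Matrix.smul_cons, smul_eq_mul, Matrix.smul_empty,
    Matrix.vecCons_inj, and_true] at hslope ⊢
  refine ⟨?_, ?_, ?_⟩ <;> grind

theorem eval_addSubMap_sym2x_of_X_ne {x₁ y₁ x₂ y₂ : K} (h₁ : W.Nonsingular x₁ y₁)
    (h₂ : W.Nonsingular x₂ y₂) (hx : x₁ ≠ x₂) :
    (fun i ↦ (addSubMap W i).eval ((Point.some x₁ y₁ h₁).sym2x (Point.some x₂ y₂ h₂))) =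
      (x₁ - x₂) ^ 2 • (Point.some x₁ y₁ h₁ + Point.some x₂ y₂ h₂).sym2x
        (Point.some x₁ y₁ h₁ - Point.some x₂ y₂ h₂) := by
  have hd : x₁ - x₂ ≠ 0 := sub_ne_zero.mpr hx
  have e₁ := (equation_iff _ _).mp h₁.1
  have e₂ := (equation_iff _ _).mp h₂.1
  rw [sub_eq_add_neg (Point.some x₁ y₁ h₁), Point.neg_some, Point.add_of_X_ne hx,
    Point.add_of_X_ne hx, Point.sym2x_some_some, Point.sym2x_some_some, eval_addSubMap,
    slope_of_X_ne hx, slope_of_X_ne hx]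
  simp only [addX, negY, b₂, b₄, b₆, b₈, Matrix.smul_cons, smul_eq_mul, Matrix.smul_empty,
    Matrix.vecCons_inj, and_true]
  refine ⟨?_, ?_, ?_⟩ <;> field_simp <;> grind

theorem exists_eval_addSubMap_sym2x_self (P : W.Point) :
    ∃ c : K, c ≠ 0 ∧ (fun i ↦ (addSubMap W i).eval (P.sym2x P)) = c • (P + P).sym2x 0 := by
  rcases P with _ | ⟨x, y, h⟩
  · refine ⟨1, one_ne_zero, ?_⟩
    rw [← Point.zero_def, add_zero, Point.sym2x_zero_zero, eval_addSubMap]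
    simp
  by_cases hy : y = W.negY x y
  · refine ⟨_, pow_ne_zero 2 ?_, eval_addSubMap_sym2x_self_of_Y_eq h hy⟩
    have hX := ((nonsingular_iff _ _).mp h).2.resolve_right (not_not_intro hy)
    grind
  · exact ⟨_, pow_ne_zero 2 (sub_ne_zero.mpr hy), eval_addSubMap_sym2x_self_of_Y_ne h hy⟩

theorem exists_eval_addSubMap_sym2x (P Q : W.Point) :
    ∃ c : K, c ≠ 0 ∧
      (fun i ↦ (addSubMap W i).eval (P.sym2x Q)) = c • (P + Q).sym2x (P - Q) := by
  by_cases hPQ : P.xRep = Q.xRep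
  · rcases Point.eq_or_eq_neg_of_xRep_eq_xRep hPQ with rfl | rfl
    · simpa only [sub_self] using exists_eval_addSubMap_sym2x_self P
    · simpa only [neg_add_cancel, ← neg_add', Point.sym2x_neg_left, Point.sym2x_neg_right,
        Point.sym2x_comm 0] using exists_eval_addSubMap_sym2x_self Q
  rcases P with _ | ⟨x₁, y₁, h₁⟩ <;> rcases Q with _ | ⟨x₂, y₂, h₂⟩
  · exact absurd rfl hPQ
  · refine ⟨1, one_ne_zero, ?_⟩
    rw [← Point.zero_def, zero_add, zero_sub, Point.sym2x_neg_right, Point.sym2x_zero_some,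
      Point.sym2x_some_some, eval_addSubMap]
    simp [pow_two, two_mul]
  · refine ⟨1, one_ne_zero, ?_⟩
    rw [← Point.zero_def, add_zero, sub_zero, Point.sym2x_some_zero, Point.sym2x_some_some,
      eval_addSubMap]
    simp [pow_two, two_mul]
  · have hx : x₁ ≠ x₂ := fun hx ↦ hPQ (by simp only [Point.xRep_some, hx])
    exact ⟨_, pow_ne_zero 2 (sub_ne_zero.mpr hx), eval_addSubMap_sym2x_of_X_ne h₁ h₂ hx⟩

theorem exists_naiveHeight_add_add_naiveHeight_sub_le [AdmissibleAbsValues K] (W : Affine K) :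
    ∃ C, ∀ P Q : W.Point,
      naiveHeight (P + Q) + naiveHeight (P - Q) ≤ 2 * naiveHeight P + 2 * naiveHeight Q + C := by
  obtain ⟨C₁, hsym⟩ := exists_abs_logHeight_sym2x_sub_le W
  obtain ⟨C₂, hmap⟩ := logHeight_eval_le' (isHomogeneous_addSubMap W)
  refine ⟨3 * C₁ + C₂, fun P Q ↦ ?_⟩
  obtain ⟨c, hc, hPQ⟩ := exists_eval_addSubMap_sym2x P Q
  have hdouble : logHeight ((P + Q).sym2x (P - Q)) ≤ C₂ + 2 * logHeight (P.sym2x Q) := by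
    simpa only [hPQ, logHeight_smul_eq_logHeight _ hc, Nat.cast_ofNat] using hmap (P.sym2x Q)
  have hin := abs_le.mp (hsym P Q)
  have hout := abs_le.mp (hsym (P + Q) (P - Q))
  linarith [hin.2, hout.1]

end NaiveHeight

theorem le_of_second_difference_le {u : ℕ → ℝ} {D : ℝ}
    (hu : ∀ n, u (n + 2) - 2 * u (n + 1) + u n ≤ D) (n : ℕ) :
    u n ≤ u 0 + n * (u 1 - u 0) + D * (n * (n - 1) / 2) := by
  have hdiff (n : ℕ) : u (n + 1) - u n ≤ u 1 - u 0 + n * D := by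
    induction n with
    | zero => simp
    | succ n ih => push_cast; linarith [hu n]
  induction n with
  | zero => simp
  | succ n ih => push_cast; linarith [hdiff n]

section QuadraticGrowth

variable {G : Type*} [AddCommGroup G] {h : G → ℝ} {C : ℝ}

theorem exists_nsmul_le_mul_one_add_sq (h_nonneg : ∀ P, 0 ≤ h P)
    (h_add_sub : ∀ P Q, h (P + Q) + h (P - Q) ≤ 2 * h P + 2 * h Q + C) (P : G) :
    ∃ K, 0 ≤ K ∧ ∀ n : ℕ, h (n • P) ≤ K * (1 + (n : ℝ) ^ 2) := by
  have hP := h_nonneg P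
  have h0 := h_nonneg 0
  refine ⟨h 0 + 3 * h P + |C|, by positivity, fun n ↦ ?_⟩
  have hbound : h (n • P) ≤ h 0 + n * (h P - h 0) + (2 * h P + C) * (n * (n - 1) / 2) := by
    have hsecond (k : ℕ) : h ((k + 2) • P) - 2 * h ((k + 1) • P) + h (k • P) ≤ 2 * h P + C := by
      have hk := h_add_sub ((k + 1) • P) P
      rw [← succ_nsmul, succ_nsmul P k, add_sub_cancel_right, ← succ_nsmul] at hk
      linarith
    simpa using le_of_second_difference_le (u := fun k ↦ h (k • P)) hsecond n
  have hn : (n : ℝ) ≤ (n : ℝ) ^ 2 := by exact_mod_cast Nat.le_self_pow two_ne_zero n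
  have hn0 : (0 : ℝ) ≤ n := n.cast_nonneg
  have htri_nonneg : 0 ≤ (n : ℝ) * (n - 1) / 2 := by linarith
  have htri_le : (n : ℝ) * (n - 1) / 2 ≤ (n : ℝ) ^ 2 := by linarith [sq_nonneg (n : ℝ)]
  have hlinear : n * (h P - h 0) ≤ (n : ℝ) ^ 2 * h P := by
    linarith [mul_le_mul_of_nonneg_right hn hP, mul_nonneg hn0 h0]
  calc h (n • P) ≤ h 0 + n * (h P - h 0) + (2 * h P + C) * (n * (n - 1) / 2) := hbound
    _ ≤ h 0 + (n : ℝ) ^ 2 * h P + (2 * h P + |C|) * (n : ℝ) ^ 2 := by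
      gcongr
      exact le_abs_self C
    _ ≤ (h 0 + 3 * h P + |C|) * (1 + (n : ℝ) ^ 2) := by
      linarith [mul_nonneg h0 (sq_nonneg (n : ℝ)), abs_nonneg C]

theorem exists_zsmul_le_mul_one_add_sq (h_nonneg : ∀ P, 0 ≤ h P)
    (h_add_sub : ∀ P Q, h (P + Q) + h (P - Q) ≤ 2 * h P + 2 * h Q + C) (P : G) :
    ∃ K, 0 ≤ K ∧ ∀ n : ℤ, h (n • P) ≤ K * (1 + (n : ℝ) ^ 2) := by
  obtain ⟨K₁, hK₁, hpos⟩ := exists_nsmul_le_mul_one_add_sq h_nonneg h_add_sub P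
  obtain ⟨K₂, -, hneg⟩ := exists_nsmul_le_mul_one_add_sq h_nonneg h_add_sub (-P)
  refine ⟨max K₁ K₂, hK₁.trans (le_max_left _ _), fun n ↦ ?_⟩
  rcases n.eq_nat_or_neg with ⟨k, rfl | rfl⟩
  · rw [natCast_zsmul, Int.cast_natCast]
    exact (hpos k).trans (by gcongr; exact le_max_left _ _)
  · rw [neg_smul, natCast_zsmul, ← smul_neg, Int.cast_neg, Int.cast_natCast, neg_sq]
    exact (hneg k).trans (by gcongr; exact le_max_right _ _)

theorem exists_sum_zsmul_le_mul_one_add_sum_sq (h_nonneg : ∀ P, 0 ≤ h P)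
    (h_add_sub : ∀ P Q, h (P + Q) + h (P - Q) ≤ 2 * h P + 2 * h Q + C)
    {ι : Type*} (s : Finset ι) (P : ι → G) :
    ∃ K, 0 ≤ K ∧ ∀ v : ι → ℤ, h (∑ i ∈ s, v i • P i) ≤ K * (1 + ∑ i ∈ s, (v i : ℝ) ^ 2) := by
  classical
  induction s using Finset.induction with
  | empty => exact ⟨h 0, h_nonneg 0, fun v ↦ by simp⟩
  | insert a s ha ih =>
    obtain ⟨K, hK, hsum⟩ := ih
    obtain ⟨D, hD, hsmul⟩ := exists_zsmul_le_mul_one_add_sq h_nonneg h_add_sub (P a)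
    refine ⟨2 * D + 2 * K + |C|, by positivity, fun v ↦ ?_⟩
    rw [Finset.sum_insert ha, Finset.sum_insert ha]
    set S : ℝ := ∑ i ∈ s, (v i : ℝ) ^ 2
    have hS : 0 ≤ S := Finset.sum_nonneg fun i _ ↦ sq_nonneg _
    have hadd : h (v a • P a + ∑ i ∈ s, v i • P i) ≤
        2 * (D * (1 + (v a : ℝ) ^ 2)) + 2 * (K * (1 + S)) + |C| := by
      linarith [h_add_sub (v a • P a) (∑ i ∈ s, v i • P i),
        h_nonneg (v a • P a - ∑ i ∈ s, v i • P i), hsmul (v a), hsum v, le_abs_self C]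
    have hDS : 0 ≤ D * S := mul_nonneg hD hS
    have hKv : 0 ≤ K * (v a : ℝ) ^ 2 := by positivity
    have hCv : 0 ≤ |C| * ((v a : ℝ) ^ 2 + S) := by positivity
    linarith

theorem exists_finset_card_eq_pow_and_le_mul_sq (h_nonneg : ∀ P, 0 ≤ h P)
    (h_add_sub : ∀ P Q, h (P + Q) + h (P - Q) ≤ 2 * h P + 2 * h Q + C)
    {ι : Type*} [Fintype ι] [Nonempty ι] {φ : (ι → ℤ) →+ G} (hφ : Function.Injective φ) :
    ∃ H, 0 ≤ H ∧ ∀ N : ℕ, 1 ≤ N → ∃ S : Finset G,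
      0 ∉ S ∧ S.card = N ^ Fintype.card ι ∧ ∀ P ∈ S, h P ≤ H * (N : ℝ) ^ 2 := by
  classical
  obtain ⟨K, hK, hsum⟩ := exists_sum_zsmul_le_mul_one_add_sum_sq h_nonneg h_add_sub
    Finset.univ fun i ↦ φ fun j ↦ if i = j then 1 else 0
  refine ⟨K * (1 + Fintype.card ι), by positivity, fun N hN ↦ ?_⟩
  let box : Finset (ι → ℤ) := Fintype.piFinset fun _ ↦ Finset.Icc 1 (N : ℤ)
  have mem_box {v : ι → ℤ} (hv : v ∈ box) (i : ι) : 1 ≤ v i ∧ v i ≤ N :=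
    Finset.mem_Icc.mp (Fintype.mem_piFinset.mp hv i)
  refine ⟨box.map ⟨φ, hφ⟩, fun h0 ↦ ?_, by simp [box], ?_⟩
  · obtain ⟨v, hv, hv0⟩ := Finset.mem_map.mp h0
    obtain ⟨i⟩ := ‹Nonempty ι›
    have hvi := congrFun (hφ (hv0.trans φ.map_zero.symm)) i
    have := (mem_box hv i).1
    simp_all
  · rw [Finset.forall_mem_map]
    intro v hv
    have hφv : φ v = ∑ i, v i • φ fun j ↦ if i = j then 1 else 0 :=
      φ.toIntLinearMap.pi_apply_eq_sum_univ v
    have hv2 : ∑ i, (v i : ℝ) ^ 2 ≤ Fintype.card ι * (N : ℝ) ^ 2 := by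
      rw [← nsmul_eq_mul]
      refine Finset.sum_le_card_nsmul _ _ _ fun i _ ↦ ?_
      have hvi := mem_box hv i
      exact_mod_cast pow_le_pow_left₀ (zero_le_one.trans hvi.1) hvi.2 2
    have hN2 : (1 : ℝ) ≤ (N : ℝ) ^ 2 := by exact_mod_cast Nat.one_le_pow 2 N hN
    calc h (φ v) ≤ K * (1 + ∑ i, (v i : ℝ) ^ 2) := hφv ▸ hsum v
      _ ≤ K * ((N : ℝ) ^ 2 + Fintype.card ι * (N : ℝ) ^ 2) := by gcongr
      _ = K * (1 + Fintype.card ι) * (N : ℝ) ^ 2 := by ring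

end QuadraticGrowth

section IntegerSolutions

variable {m : ℤ}

theorem setOf_cube_add_cube_eq_subset_Icc (hm : m ≠ 0) :
    {p : ℤ × ℤ | p.1 ^ 3 + p.2 ^ 3 = m} ⊆ Set.Icc (-(2 * |m|), -(2 * |m|)) (2 * |m|, 2 * |m|) := by
  rintro ⟨x, y⟩ (h : x ^ 3 + y ^ 3 = m)
  have hfactor : (x + y) * (x ^ 2 - x * y + y ^ 2) = m := by rw [← h]; ring
  have hadd : x + y ≠ 0 := left_ne_zero_of_mul (hfactor ▸ hm)
  have hquad : x ^ 2 - x * y + y ^ 2 ≤ |m| :=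
    calc x ^ 2 - x * y + y ^ 2 ≤ |x ^ 2 - x * y + y ^ 2| := le_abs_self _
      _ ≤ |x + y| * |x ^ 2 - x * y + y ^ 2| :=
        le_mul_of_one_le_left (abs_nonneg _) (Int.one_le_abs hadd)
      _ = |m| := by rw [← abs_mul, hfactor]
  have hm1 : 1 ≤ |m| := Int.one_le_abs hm
  have hx : |x| ≤ 2 * |m| :=
    abs_le_of_sq_le_sq (by nlinarith [sq_nonneg (x - 2 * y)]) (by positivity)
  have hy : |y| ≤ 2 * |m| :=
    abs_le_of_sq_le_sq (by nlinarith [sq_nonneg (y - 2 * x)]) (by positivity)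
  exact ⟨⟨(abs_le.mp hx).1, (abs_le.mp hy).1⟩, ⟨(abs_le.mp hx).2, (abs_le.mp hy).2⟩⟩

theorem Nf_le_sq (hm : m ≠ 0) : (Nf m : ℤ) ≤ (4 * |m| + 1) ^ 2 := by
  have hcard := Set.ncard_le_ncard (setOf_cube_add_cube_eq_subset_Icc hm) (Set.finite_Icc _ _)
  rw [← Finset.coe_Icc, Set.ncard_coe_finset, ← Finset.Icc_product_Icc, Finset.card_product,
    Int.card_Icc] at hcard
  zify at hcard
  rw [Int.toNat_of_nonneg (by linarith [abs_nonneg m])] at hcard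
  unfold Nf
  linarith

theorem lt_abs_of_sq_lt_Nf {B : ℝ} (hm : m ≠ 0) (hB : (4 * |B| + 1) ^ 2 < Nf m) :
    B < |(m : ℝ)| := by
  by_contra! hmB
  have hNf : (Nf m : ℝ) ≤ (4 * |(m : ℝ)| + 1) ^ 2 := by exact_mod_cast Nf_le_sq hm
  have hle : (4 * |(m : ℝ)| + 1) ^ 2 ≤ (4 * |B| + 1) ^ 2 :=
    pow_le_pow_left₀ (by positivity) (by linarith [le_abs_self B]) 2
  linarith

/-- `d` is a common denominator of the two coordinates of `p`. -/
def IsCommonDenom (d : ℤ) (p : ℚ × ℚ) : Prop :=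
  ∃ a b : ℤ, (a : ℚ) = d * p.1 ∧ (b : ℚ) = d * p.2

theorem IsCommonDenom.of_dvd {d e : ℤ} {p : ℚ × ℚ} (h : IsCommonDenom d p) (hde : d ∣ e) :
    IsCommonDenom e p := by
  obtain ⟨a, b, ha, hb⟩ := h
  obtain ⟨k, rfl⟩ := hde
  exact ⟨k * a, k * b, by push_cast; rw [ha]; ring, by push_cast; rw [hb]; ring⟩

theorem card_le_Nf_mul_cube {d : ℤ} (hm : m ≠ 0) (hd : d ≠ 0) {S : Finset (ℚ × ℚ)}
    (hS : ∀ p ∈ S, p.1 ^ 3 + p.2 ^ 3 = m) (hdS : ∀ p ∈ S, IsCommonDenom d p) :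
    S.card ≤ Nf (m * d ^ 3) := by
  have hdQ : (d : ℚ) ≠ 0 := Int.cast_ne_zero.mpr hd
  have hfinite : {p : ℤ × ℤ | p.1 ^ 3 + p.2 ^ 3 = m * d ^ 3}.Finite :=
    (Set.finite_Icc _ _).subset
      (setOf_cube_add_cube_eq_subset_Icc (mul_ne_zero hm (pow_ne_zero 3 hd)))
  let scale (p : ℤ × ℤ) : ℚ × ℚ := (p.1 / d, p.2 / d)
  have hcover : (S : Set (ℚ × ℚ)) ⊆ scale '' {p | p.1 ^ 3 + p.2 ^ 3 = m * d ^ 3} := by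
    intro p hp
    obtain ⟨a, b, ha, hb⟩ := hdS p hp
    refine ⟨(a, b), ?_, Prod.ext ?_ ?_⟩
    · have : (a : ℚ) ^ 3 + (b : ℚ) ^ 3 = m * d ^ 3 := by rw [ha, hb, ← hS p hp]; ring
      exact_mod_cast this
    · simp only [scale, ha, mul_div_cancel_left₀ _ hdQ]
    · simp only [scale, hb, mul_div_cancel_left₀ _ hdQ]
  calc S.card = (S : Set (ℚ × ℚ)).ncard := (Set.ncard_coe_finset S).symm
    _ ≤ (scale '' {p | p.1 ^ 3 + p.2 ^ 3 = m * d ^ 3}).ncard :=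
      Set.ncard_le_ncard hcover (hfinite.image scale)
    _ ≤ Nf (m * d ^ 3) := Set.ncard_image_le hfinite

end IntegerSolutions

section CubicPoints

open WeierstrassCurve WeierstrassCurve.Affine Height

variable {m0 : ℤ}

theorem sq_eq_of_nonsingular_Eprime {X Y : ℚ} (h : (Eprime m0).Nonsingular X Y) :
    Y ^ 2 = X ^ 3 - 432 * (m0 : ℚ) ^ 2 := by
  simpa [Eprime, sub_eq_add_neg] using (equation_iff _ _).mp h.1

theorem X_ne_zero_of_nonsingular_Eprime (hm0 : m0 ≠ 0) {X Y : ℚ}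
    (h : (Eprime m0).Nonsingular X Y) : X ≠ 0 := by
  rintro rfl
  have hm0Q : 0 < (m0 : ℚ) ^ 2 := by positivity
  nlinarith [sq_eq_of_nonsingular_Eprime h, sq_nonneg Y]

/-- The image of a point of `Y² = X³ - 432 m₀²` on the cubic `x³ + y³ = m₀`. The point at infinity,
which corresponds to the point at infinity of the cubic, is sent to the junk value `(0, 0)`. -/
def cubicPoint : (Eprime m0).Point → ℚ × ℚ
  | .zero => (0, 0)
  | .some X Y _ => ((36 * m0 + Y) / (6 * X), (36 * m0 - Y) / (6 * X))

theorem cubicPoint_cube_add_cube (hm0 : m0 ≠ 0) {P : (Eprime m0).Point} (hP : P ≠ 0) :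
    (cubicPoint P).1 ^ 3 + (cubicPoint P).2 ^ 3 = m0 := by
  rcases P with _ | ⟨X, Y, h⟩
  · exact absurd rfl hP
  have hX := X_ne_zero_of_nonsingular_Eprime hm0 h
  have hY := sq_eq_of_nonsingular_Eprime h
  simp only [cubicPoint]
  field_simp
  grind

theorem cubicPoint_injOn (hm0 : m0 ≠ 0) :
    Set.InjOn (cubicPoint (m0 := m0)) {0}ᶜ := by
  rintro (_ | ⟨X, Y, h⟩) hP (_ | ⟨X', Y', h'⟩) hP' heq
  · rfl
  · exact absurd rfl hP
  · exact absurd rfl hP'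
  have hm0Q : (m0 : ℚ) ≠ 0 := Int.cast_ne_zero.mpr hm0
  have hX := X_ne_zero_of_nonsingular_Eprime hm0 h
  have hX' := X_ne_zero_of_nonsingular_Eprime hm0 h'
  obtain ⟨hx, hy⟩ := Prod.mk.inj heq
  field_simp at hx hy
  have hXX' : X = X' :=
    mul_left_cancel₀ (mul_ne_zero (by norm_num : (72 : ℚ) ≠ 0) hm0Q) (by linarith)
  subst hXX'
  have hYY' : Y = Y' := by
    have := mul_right_cancel₀ hX (hx.trans (mul_comm _ _))
    linarith
  subst hYY'
  rfl

/-- A common denominator of the coordinates of `cubicPoint P`, read off from the `X`-coordinate of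
`P` (and `1` at infinity). -/
def cubicDenom : (Eprime m0).Point → ℤ
  | .zero => 1
  | .some X _ _ => 6 * X.num * X.den

theorem cubicDenom_ne_zero (hm0 : m0 ≠ 0) (P : (Eprime m0).Point) : cubicDenom P ≠ 0 := by
  rcases P with _ | ⟨X, Y, h⟩
  · exact one_ne_zero
  · have hX : X.num ≠ 0 := Rat.num_ne_zero.mpr (X_ne_zero_of_nonsingular_Eprime hm0 h)
    exact mul_ne_zero (mul_ne_zero (by norm_num) hX) (Int.natCast_ne_zero.mpr X.den_ne_zero)

theorem exists_int_eq_mul_den_sq {X Y : ℚ} (h : (Eprime m0).Nonsingular X Y) :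
    ∃ w : ℤ, (w : ℚ) = Y * X.den ^ 2 := by
  -- The square of `Y * X.den ^ 2` is an integer by the equation, and `ℤ` is integrally closed.
  have hsq : (Y * (X.den : ℚ) ^ 2) ^ 2 =
      ((X.den * (X.num ^ 3 - 432 * m0 ^ 2 * X.den ^ 3) : ℤ) : ℚ) := by
    push_cast
    rw [← Rat.mul_den_eq_num X, mul_pow, sq_eq_of_nonsingular_Eprime h]
    ring
  have hintegral : _root_.IsIntegral ℤ (Y * (X.den : ℚ) ^ 2) :=
    .of_pow two_pos (hsq ▸ isIntegral_algebraMap)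
  exact IsIntegrallyClosed.isIntegral_iff.mp hintegral

theorem isCommonDenom_cubicDenom (hm0 : m0 ≠ 0) (P : (Eprime m0).Point) :
    IsCommonDenom (cubicDenom P) (cubicPoint P) := by
  rcases P with _ | ⟨X, Y, h⟩
  · exact ⟨0, 0, by simp [cubicPoint], by simp [cubicPoint]⟩
  have hX := X_ne_zero_of_nonsingular_Eprime hm0 h
  obtain ⟨w, hw⟩ := exists_int_eq_mul_den_sq h
  refine ⟨36 * m0 * X.den ^ 2 + w, 36 * m0 * X.den ^ 2 - w, ?_, ?_⟩ <;>
  · simp only [cubicDenom, cubicPoint]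
    push_cast
    rw [hw, ← Rat.mul_den_eq_num X]
    field_simp

theorem log_abs_cubicDenom_le (hm0 : m0 ≠ 0) (P : (Eprime m0).Point) :
    Real.log |(cubicDenom P : ℝ)| ≤ Real.log 6 + 2 * naiveHeight P := by
  rcases P with _ | ⟨X, Y, h⟩
  · have hlog : 0 ≤ Real.log 6 := Real.log_nonneg (by norm_num)
    simpa [cubicDenom] using add_nonneg hlog (mul_nonneg zero_le_two (naiveHeight_nonneg _))
  have hne : cubicDenom (Point.some X Y h) ≠ 0 := cubicDenom_ne_zero hm0 _
  set M : ℝ := max (|X.num| : ℝ) X.den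
  have hM : 0 < M := lt_max_of_lt_right (by exact_mod_cast X.den_pos)
  have hheight : naiveHeight (Point.some X Y h) = Real.log M := by
    rw [naiveHeight, Point.xRep_some, ← logHeight₁_eq_logHeight, Rat.logHeight₁_eq_log_max]
    simp [M, Nat.cast_natAbs]
  calc Real.log |(cubicDenom (Point.some X Y h) : ℝ)| ≤ Real.log (6 * M ^ 2) := by
        refine Real.log_le_log (by positivity) ?_
        simp only [cubicDenom, Int.cast_mul, abs_mul, pow_two, ← mul_assoc]
        gcongr
        · simp
        · exact le_max_left _ _
        · simp [M]
    _ = Real.log 6 + 2 * naiveHeight (Point.some X Y h) := by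
        rw [Real.log_mul (by norm_num) (pow_pos hM 2).ne', Real.log_pow, hheight, Nat.cast_ofNat]

theorem exists_card_le_Nf_and_log_abs_le (hm0 : m0 ≠ 0) {S : Finset (Eprime m0).Point}
    (h0 : 0 ∉ S) {H : ℝ} (hH : ∀ P ∈ S, naiveHeight P ≤ H) :
    ∃ m : ℤ, m ≠ 0 ∧ S.card ≤ Nf m ∧
      Real.log |(m : ℝ)| ≤ Real.log |(m0 : ℝ)| + 3 * (S.card * (Real.log 6 + 2 * H)) := by
  classical
  set d : ℤ := ∏ P ∈ S, cubicDenom P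
  have hd : d ≠ 0 := Finset.prod_ne_zero_iff.mpr fun P _ ↦ cubicDenom_ne_zero hm0 P
  have hS {P : (Eprime m0).Point} (hP : P ∈ S) : P ≠ 0 := ne_of_mem_of_not_mem hP h0
  have hcard : (S.image cubicPoint).card = S.card :=
    Finset.card_image_of_injOn ((cubicPoint_injOn hm0).mono fun P hP ↦ hS hP)
  refine ⟨m0 * d ^ 3, mul_ne_zero hm0 (pow_ne_zero 3 hd), ?_, ?_⟩
  · rw [← hcard]
    refine card_le_Nf_mul_cube hm0 hd (Finset.forall_mem_image.mpr fun P hP ↦ ?_)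
      (Finset.forall_mem_image.mpr fun P hP ↦ ?_)
    · exact cubicPoint_cube_add_cube hm0 (hS hP)
    · exact (isCommonDenom_cubicDenom hm0 P).of_dvd (Finset.dvd_prod_of_mem _ hP)
  · have hlog_d : Real.log |(d : ℝ)| ≤ S.card * (Real.log 6 + 2 * H) := by
      rw [Int.cast_prod, Finset.abs_prod, Real.log_prod fun P _ ↦
        abs_ne_zero.mpr (Int.cast_ne_zero.mpr (cubicDenom_ne_zero hm0 P)), ← nsmul_eq_mul]
      refine Finset.sum_le_card_nsmul _ _ _ fun P hP ↦ ?_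
      linarith [log_abs_cubicDenom_le hm0 P, hH P hP]
    rw [Int.cast_mul, Int.cast_pow, abs_mul, abs_pow, Real.log_mul (by positivity) (by positivity),
      Real.log_pow, Nat.cast_ofNat]
    gcongr

theorem exists_pow_le_Nf_and_log_abs_le (hm0 : m0 ≠ 0) {r : ℕ} (hr : 1 ≤ r)
    {φ : (Fin r → ℤ) →+ (Eprime m0).Point} (hφ : Function.Injective φ) :
    ∃ A : ℝ, 0 < A ∧ ∀ N : ℕ, 1 ≤ N → ∃ m : ℤ, m ≠ 0 ∧ N ^ r ≤ Nf m ∧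
      Real.log |(m : ℝ)| ≤ A * (N : ℝ) ^ (r + 2) := by
  have : NeZero r := ⟨Nat.one_le_iff_ne_zero.mp hr⟩
  obtain ⟨C, hC⟩ := exists_naiveHeight_add_add_naiveHeight_sub_le (Eprime m0)
  obtain ⟨H, hH, hpoints⟩ := exists_finset_card_eq_pow_and_le_mul_sq naiveHeight_nonneg hC hφ
  have hlog6 : 0 < Real.log 6 := Real.log_pos (by norm_num)
  have hlog_m0 : 0 ≤ Real.log |(m0 : ℝ)| :=
    Real.log_nonneg (by exact_mod_cast Int.one_le_abs hm0)
  refine ⟨Real.log |(m0 : ℝ)| + 3 * (Real.log 6 + 2 * H), by positivity, fun N hN ↦ ?_⟩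
  obtain ⟨S, h0, hcard, hS⟩ := hpoints N hN
  obtain ⟨m, hm, hNf, hlog⟩ := exists_card_le_Nf_and_log_abs_le hm0 h0 hS
  rw [hcard, Fintype.card_fin] at hNf hlog
  refine ⟨m, hm, hNf, hlog.trans ?_⟩
  have hN2 : (1 : ℝ) ≤ (N : ℝ) ^ 2 := by exact_mod_cast Nat.one_le_pow 2 N hN
  have hNr : (1 : ℝ) ≤ (N : ℝ) ^ (r + 2) := by exact_mod_cast Nat.one_le_pow (r + 2) N hN
  push_cast
  calc Real.log |(m0 : ℝ)| + 3 * ((N : ℝ) ^ r * (Real.log 6 + 2 * (H * (N : ℝ) ^ 2)))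
      ≤ Real.log |(m0 : ℝ)| * (N : ℝ) ^ (r + 2) +
          3 * ((N : ℝ) ^ r * (Real.log 6 * (N : ℝ) ^ 2 + 2 * (H * (N : ℝ) ^ 2))) := by
        gcongr
        · exact le_mul_of_one_le_right hlog_m0 hNr
        · exact le_mul_of_one_le_right hlog6.le hN2
    _ = (Real.log |(m0 : ℝ)| + 3 * (Real.log 6 + 2 * H)) * (N : ℝ) ^ (r + 2) := by ring

end CubicPoints

theorem rpow_div_add_two_le {L A x : ℝ} {r : ℕ} (hL : 0 ≤ L) (hA : 0 ≤ A) (hx : 0 ≤ x)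
    (h : L ≤ A * x ^ (r + 2)) :
    L ^ ((r : ℝ) / (r + 2)) ≤ A ^ ((r : ℝ) / (r + 2)) * x ^ r := by
  have hexp : ((r + 2 : ℕ) : ℝ) * ((r : ℝ) / (r + 2)) = r := by
    push_cast
    field_simp
  calc L ^ ((r : ℝ) / (r + 2)) ≤ (A * x ^ (r + 2)) ^ ((r : ℝ) / (r + 2)) := by gcongr
    _ = A ^ ((r : ℝ) / (r + 2)) * x ^ r := by
      rw [Real.mul_rpow hA (by positivity), ← Real.rpow_natCast_mul hx, hexp, Real.rpow_natCast]

theorem stmt_0 (m0 : ℤ) (hm0 : m0 ≠ 0) (r : ℕ) (hr : 1 ≤ r)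
    (φ : (Fin r → ℤ) →+ (Eprime m0).Point) (hφ : Function.Injective φ) :
    ∃ c : ℝ, 0 < c ∧ ∀ B : ℝ, ∃ m : ℤ, B < |(m : ℝ)| ∧
      c * Real.log |(m : ℝ)| ^ ((r : ℝ) / (r + 2)) < (Nf m : ℝ) := by
  obtain ⟨A, hA, hsolutions⟩ := exists_pow_le_Nf_and_log_abs_le hm0 hr hφ
  set e : ℝ := (r : ℝ) / (r + 2)
  have hAe : 0 < A ^ e := Real.rpow_pos_of_pos hA e
  refine ⟨1 / (2 * A ^ e), one_div_pos.mpr (mul_pos two_pos hAe), fun B ↦ ?_⟩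
  obtain ⟨N, hN⟩ := exists_nat_gt ((4 * |B| + 1) ^ 2)
  have hN0 : 0 < N := by exact_mod_cast (by positivity : 0 ≤ (4 * |B| + 1) ^ 2).trans_lt hN
  obtain ⟨m, hm, hNf, hlog⟩ := hsolutions N hN0
  have hNfR : (N : ℝ) ^ r ≤ Nf m := by exact_mod_cast hNf
  have hNr : (N : ℝ) ≤ (N : ℝ) ^ r := by exact_mod_cast Nat.le_self_pow (by omega) N
  refine ⟨m, lt_abs_of_sq_lt_Nf hm (hN.trans_le (hNr.trans hNfR)), ?_⟩
  have hlog0 : 0 ≤ Real.log |(m : ℝ)| := Real.log_nonneg (by exact_mod_cast Int.one_le_abs hm)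
  calc 1 / (2 * A ^ e) * Real.log |(m : ℝ)| ^ e
      ≤ 1 / (2 * A ^ e) * (A ^ e * (N : ℝ) ^ r) := by
        gcongr
        exact rpow_div_add_two_le hlog0 hA.le N.cast_nonneg hlog
    _ = (N : ℝ) ^ r / 2 := by field_simp
    _ < (N : ℝ) ^ r := half_lt_self (by positivity)
    _ ≤ Nf m := hNfR
end

section
/- For every real number $B$ there exists an integer $m$ with $|m| > B$ such that $N_f(m) > 4.2 \times 10^{-6} \cdot (\log |m|)^{11/13}$. -/
/-!
The curve `u³ + v³ = k` is birational to `y² = x³ - 432k²`, and for a suitable `k`, found by Elkies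
and Rogers, eleven independent rational points on it are known. All combinations of them with
coefficients in `{1, …, N}` are distinct, so they give `N¹¹` rational points on `u³ + v³ = k`; the
height is quadratic, so their denominators have logarithm `O(N²)`. Clearing all denominators with
one factor `D` of logarithm `O(N¹³)` turns them into integral points on `u³ + v³ = kD³`, whence
`N_f(m) ≥ N¹¹` for an `m` with `log |m| = O(N¹³)`.

A bound `h(P + Q) ≤ 4 max(h(P), h(Q)) + c` on the naive height suffices for the `O(N²)`, because a
sum of `O(N)` points can be bracketed as a binary tree of depth `log₂ N + O(1)`. Independence is
shown by `2`-descent: for a prime `p` with a cube root `t` of `432k²` in `ℚ_p`, the points with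
`x - t` a square in `ℚ_p` form a subgroup containing all doubles, and for each of the eleven points
there is a prime whose subgroup misses that point and contains the other ten. As there is no
`2`-torsion, the coefficients of a relation are then infinitely divisible by `2`.
-/

open WeierstrassCurve Polynomial

section Descent

variable {K F : Type*} [Field K] [Field F] [Algebra K F] {W : WeierstrassCurve.Affine K} {t : F}

/-- The `2`-descent function `x - t` on the points of a Weierstrass curve, with value `1` at the
point at infinity. It is of interest when `t` is a root of the cubic of the curve
(`IsCubicRoot`): then it is a homomorphism modulo squares. -/
def xSub (t : F) : W.Point → F
  | .zero => 1
  | .some x _ _ => algebraMap K F x - t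

/-- `t` is a root of the cubic `x³ + a₂x² + a₄x + a₆`, that is, the abscissa of a point of order
two over an extension of the base field when `a₁ = a₃ = 0`. -/
def IsCubicRoot (W : WeierstrassCurve.Affine K) (t : F) : Prop :=
  t ^ 3 + algebraMap K F W.a₂ * t ^ 2 + algebraMap K F W.a₄ * t + algebraMap K F W.a₆ = 0

lemma xSub_neg (t : F) (P : W.Point) : xSub t (-P) = xSub t P := by
  cases P <;> rfl

lemma xSub_ne_zero (htK : ∀ x : K, algebraMap K F x ≠ t) (P : W.Point) : xSub t P ≠ 0 := by
  cases P with
  | zero => exact one_ne_zero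
  | some x y h => exact sub_ne_zero.2 (htK x)

variable [W.IsCharNeTwoNF]

lemma equation_iff_of_isCharNeTwoNF {x y : K} :
    W.Equation x y ↔ y ^ 2 = x ^ 3 + W.a₂ * x ^ 2 + W.a₄ * x + W.a₆ := by
  simp [Affine.equation_iff]

lemma negY_of_isCharNeTwoNF (x y : K) : W.negY x y = -y := by
  simp [Affine.negY]

variable [DecidableEq K]

lemma eq_zero_of_add_self_eq_zero (h2 : (2 : K) ≠ 0)
    (hroot : ∀ x : K, x ^ 3 + W.a₂ * x ^ 2 + W.a₄ * x + W.a₆ ≠ 0) {P : W.Point}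
    (hP : P + P = 0) : P = 0 := by
  rcases P with _ | ⟨x, y, h⟩
  · rfl
  have hneg := eq_neg_of_add_eq_zero_left hP
  rw [Affine.Point.neg_some, Affine.Point.some.injEq, negY_of_isCharNeTwoNF] at hneg
  have hy : y = 0 := by
    have : 2 * y = 0 := by linear_combination hneg.2
    exact (mul_eq_zero.1 this).resolve_left h2
  refine absurd ?_ (hroot x)
  rw [← equation_iff_of_isCharNeTwoNF.1 h.1, hy, zero_pow two_ne_zero]

lemma isSquare_xSub_mul_xSub_mul_xSub_add (ht : IsCubicRoot W t) (P Q : W.Point) :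
    IsSquare (xSub t P * xSub t Q * xSub t (P + Q)) := by
  rcases P with _ | ⟨x₁, y₁, h₁⟩
  · rw [← Affine.Point.zero_def, zero_add]
    exact ⟨xSub t Q, by simp [xSub]⟩
  rcases Q with _ | ⟨x₂, y₂, h₂⟩
  · rw [← Affine.Point.zero_def, add_zero]
    exact ⟨algebraMap K F x₁ - t, by simp [xSub]⟩
  by_cases hxy : x₁ = x₂ ∧ y₁ = W.negY x₂ y₂
  · rw [Affine.Point.add_of_Y_eq hxy.1 hxy.2]
    exact ⟨algebraMap K F x₁ - t, by simp [xSub, hxy.1]⟩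
  · rw [Affine.Point.add_some hxy]
    set ℓ := W.slope x₁ x₂ y₁ y₂ with hℓ
    -- The chord `y = ℓ(x - x₁) + y₁` meets the curve at `x₁, x₂, x₃`; evaluate at `x = t`.
    have hchord := congrArg (aeval t) (Affine.addPolynomial_slope h₁.1 h₂.1 hxy)
    rw [IsCubicRoot] at ht
    simp only [Affine.addPolynomial_eq, Cubic.toPoly, map_neg, map_add, map_mul, map_pow, map_sub,
      aeval_X, aeval_C, a₁_of_isCharNeTwoNF, a₃_of_isCharNeTwoNF, map_one, map_zero, map_ofNat,
      ← hℓ] at hchord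
    refine ⟨algebraMap K F ℓ * (t - algebraMap K F x₁) + algebraMap K F y₁, ?_⟩
    simp only [xSub]
    linear_combination -hchord - ht

lemma isSquare_xSub_add_self (ht : IsCubicRoot W t) (htK : ∀ x : K, algebraMap K F x ≠ t)
    (P : W.Point) : IsSquare (xSub t (P + P)) := by
  have hP := mul_ne_zero (xSub_ne_zero htK P) (xSub_ne_zero htK P)
  rw [← mul_div_cancel_left₀ (xSub t (P + P)) hP]
  exact (isSquare_xSub_mul_xSub_mul_xSub_add ht P P).div ⟨_, rfl⟩

/-- The kernel of the `2`-descent homomorphism `P ↦ x(P) - t` modulo squares. -/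
def squareSubgroup (ht : IsCubicRoot W t) (htK : ∀ x : K, algebraMap K F x ≠ t) :
    AddSubgroup W.Point where
  carrier := {P | IsSquare (xSub t P)}
  zero_mem' := ⟨1, (one_mul 1).symm⟩
  add_mem' {P Q} hP hQ := by
    have hPQ := mul_ne_zero (xSub_ne_zero htK P) (xSub_ne_zero htK Q)
    rw [Set.mem_ofPred_eq, ← mul_div_cancel_left₀ (xSub t (P + Q)) hPQ]
    exact (isSquare_xSub_mul_xSub_mul_xSub_add ht P Q).div (hP.mul hQ)
  neg_mem' {P} hP := by rwa [Set.mem_ofPred_eq, xSub_neg]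

end Descent

section Independence

variable {A : Type*} [AddCommGroup A]

lemma even_of_zsmul_mem {H : AddSubgroup A} (hH : ∀ a, a + a ∈ H) {a : A} (ha : a ∉ H) {n : ℤ}
    (hn : n • a ∈ H) : Even n := by
  by_contra hodd
  obtain ⟨m, rfl⟩ := Int.not_even_iff_odd.1 hodd
  refine ha ((H.add_mem_cancel_left (H.zsmul_mem (hH a) m)).1 ?_)
  convert hn using 1
  module

lemma eq_zero_of_forall_two_pow_dvd {n : ℤ} (h : ∀ k : ℕ, (2 : ℤ) ^ k ∣ n) : n = 0 := by
  refine Int.eq_zero_of_abs_lt_dvd (h n.natAbs) ?_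
  rw [Int.abs_eq_natAbs]
  exact_mod_cast n.natAbs.lt_two_pow_self

variable {ι : Type*} {P : ι → A} {H : ι → AddSubgroup A}

lemma even_of_sum_zsmul_eq_zero [Fintype ι] (hH : ∀ i a, a + a ∈ H i) (hdiag : ∀ i, P i ∉ H i)
    (hoff : ∀ i j, j ≠ i → P j ∈ H i) {c : ι → ℤ} (hc : ∑ i, c i • P i = 0) (i : ι) :
    Even (c i) := by
  classical
  refine even_of_zsmul_mem (hH i) (hdiag i) ?_
  have hrest : ∑ j ∈ Finset.univ.erase i, c j • P j ∈ H i :=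
    sum_mem fun j hj => zsmul_mem (hoff i j (Finset.ne_of_mem_erase hj)) _
  rw [← Finset.add_sum_erase _ _ (Finset.mem_univ i)] at hc
  rw [eq_neg_of_add_eq_zero_left hc]
  exact neg_mem hrest

theorem linearIndependent_of_mem_of_notMem [Finite ι] (hA : ∀ a : A, a + a = 0 → a = 0)
    (hH : ∀ i a, a + a ∈ H i) (hdiag : ∀ i, P i ∉ H i) (hoff : ∀ i j, j ≠ i → P j ∈ H i) :
    LinearIndependent ℤ P := by
  have := Fintype.ofFinite ι
  rw [Fintype.linearIndependent_iff]
  suffices hdvd : ∀ (k : ℕ) (c : ι → ℤ), ∑ i, c i • P i = 0 → ∀ i, (2 : ℤ) ^ k ∣ c i from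
    fun c hc i => eq_zero_of_forall_two_pow_dvd fun k => hdvd k c hc i
  intro k
  induction k with
  | zero => simp
  | succ k ih =>
    intro c hc i
    choose d hd using even_of_sum_zsmul_eq_zero hH hdiag hoff hc
    have hsum : ∑ i, d i • P i = 0 := hA _ <| by
      simpa only [hd, add_smul, Finset.sum_add_distrib] using hc
    rw [hd i, ← two_mul, pow_succ']
    exact mul_dvd_mul_left 2 (ih d hsum i)

end Independence

section Mordell

/-- The Mordell curve `y² = x³ + b`. -/
def mordellCurve {R : Type*} [CommRing R] (b : R) : WeierstrassCurve.Affine R := ⟨0, 0, 0, 0, b⟩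

instance {R : Type*} [CommRing R] (b : R) : (mordellCurve b).IsShortNF := ⟨rfl, rfl, rfl⟩

lemma mordellCurve_equation_iff {R : Type*} [CommRing R] {b x y : R} :
    (mordellCurve b).Equation x y ↔ y ^ 2 = x ^ 3 + b := by
  simp [Affine.equation_iff, mordellCurve]

lemma mordellCurve_nonsingular {K : Type*} [Field K] {b x y : K} (h6 : (6 : K) ≠ 0) (hb : b ≠ 0)
    (h : y ^ 2 = x ^ 3 + b) : (mordellCurve b).Nonsingular x y := by
  have hΔ : (mordellCurve b).Δ = -(2 * 6 ^ 3 * b ^ 2) := by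
    simp only [WeierstrassCurve.Δ, b₂, b₄, b₆, b₈, mordellCurve]
    ring
  have h2 : (2 : K) ≠ 0 := fun h2 => h6 (by linear_combination 3 * h2)
  refine (Affine.equation_iff_nonsingular_of_Δ_ne_zero ?_).1 (mordellCurve_equation_iff.2 h)
  rw [hΔ]
  exact neg_ne_zero.2 (mul_ne_zero (mul_ne_zero h2 (pow_ne_zero 3 h6)) (pow_ne_zero 2 hb))

lemma isCubicRoot_mordellCurve_iff {K F : Type*} [Field K] [Field F] [Algebra K F] {b : K} {t : F} :
    IsCubicRoot (mordellCurve b) t ↔ t ^ 3 + algebraMap K F b = 0 := by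
  simp [IsCubicRoot, mordellCurve]

end Mordell

section Padic

variable {p : ℕ} [Fact p.Prime]

lemma toZMod_eq_zero_iff_norm_lt_one {x : ℤ_[p]} : PadicInt.toZMod x = 0 ↔ ‖x‖ < 1 := by
  rw [← RingHom.mem_ker, PadicInt.ker_toZMod, PadicInt.maximalIdeal_eq_span_p,
    Ideal.mem_span_singleton, PadicInt.norm_lt_one_iff_dvd]

lemma exists_pow_eq_of_toZMod_pow_eq {n : ℕ} {c a : ℤ_[p]}
    (hroot : PadicInt.toZMod a ^ n = PadicInt.toZMod c)
    (hsimple : (n : ZMod p) * PadicInt.toZMod a ^ (n - 1) ≠ 0) :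
    ∃ z : ℤ_[p], z ^ n = c ∧ PadicInt.toZMod z = PadicInt.toZMod a := by
  have hderiv : ‖(n : ℤ_[p]) * a ^ (n - 1)‖ = 1 := by
    refine le_antisymm (PadicInt.norm_le_one _) (not_lt.1 fun h => hsimple ?_)
    simpa using toZMod_eq_zero_iff_norm_lt_one.2 h
  have hvalue : ‖a ^ n - c‖ < 1 := by
    rw [← toZMod_eq_zero_iff_norm_lt_one, map_sub, map_pow, hroot, sub_self]
  obtain ⟨z, hz, hza, -⟩ := hensels_lemma (R := ℤ_[p]) (F := X ^ n - C c) (a := a) (by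
    simpa [derivative_X_pow, hderiv] using hvalue)
  refine ⟨z, by simpa [sub_eq_zero] using hz, ?_⟩
  rw [← sub_eq_zero, ← map_sub, toZMod_eq_zero_iff_norm_lt_one]
  exact hza.trans_le (PadicInt.norm_le_one _)

lemma isSquare_coe_iff_isSquare_toZMod (hp : p ≠ 2) {u : ℤ_[p]} (hu : PadicInt.toZMod u ≠ 0) :
    IsSquare (u : ℚ_[p]) ↔ IsSquare (PadicInt.toZMod u) := by
  constructor
  · rintro ⟨w, hw⟩
    have hnorm : ‖w‖ ≤ 1 := by
      rw [← pow_le_one_iff_of_nonneg (norm_nonneg w) two_ne_zero, ← norm_pow, sq, ← hw]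
      exact u.norm_le_one
    obtain ⟨v, rfl⟩ : ∃ v : ℤ_[p], (v : ℚ_[p]) = w := ⟨⟨w, hnorm⟩, rfl⟩
    have huv : u = v * v := PadicInt.ext hw
    exact ⟨PadicInt.toZMod v, by rw [huv, map_mul]⟩
  · rintro ⟨s, hs⟩
    obtain ⟨a, rfl⟩ := ZMod.ringHom_surjective (PadicInt.toZMod (p := p)) s
    have ha : PadicInt.toZMod a ≠ 0 := fun h => hu (by rw [hs, h, zero_mul])
    have h2 : ((2 : ℕ) : ZMod p) ≠ 0 := by
      rw [Nat.cast_ofNat]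
      exact Ring.two_ne_zero (by rwa [ZMod.ringChar_zmod_n])
    obtain ⟨z, rfl, -⟩ := exists_pow_eq_of_toZMod_pow_eq (n := 2) (c := u) (a := a)
      (by rw [hs, sq]) (mul_ne_zero h2 (pow_ne_zero _ ha))
    exact ⟨z, by push_cast; ring⟩

variable {b t₀ : ℤ}

lemma exists_padicInt_cube_root (hp : p ≠ 3) (hroot : (p : ℤ) ∣ t₀ ^ 3 + b)
    (ht₀ : ¬ (p : ℤ) ∣ t₀) : ∃ t : ℤ_[p], t ^ 3 = ((-b : ℤ) : ℤ_[p]) ∧ PadicInt.toZMod t = t₀ := by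
  rw [← ZMod.intCast_zmod_eq_zero_iff_dvd] at hroot ht₀
  have h3 : ((3 : ℕ) : ZMod p) ≠ 0 := by
    rw [Ne, ZMod.natCast_eq_zero_iff, Nat.prime_dvd_prime_iff_eq Fact.out Nat.prime_three]
    exact hp
  obtain ⟨t, ht, htt₀⟩ := exists_pow_eq_of_toZMod_pow_eq (p := p) (n := 3) (c := ((-b : ℤ) : ℤ_[p]))
    (a := t₀)
    (by
      push_cast at hroot ⊢
      simpa using eq_neg_of_add_eq_zero_left hroot)
    (mul_ne_zero h3 (pow_ne_zero _ (by simpa using ht₀)))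
  exact ⟨t, ht, by simpa using htt₀⟩

lemma isSquare_xSub_iff_legendreSym_eq_one (hp : p ≠ 2) {t : ℤ_[p]}
    (ht : PadicInt.toZMod t = t₀) {X D : ℤ} (hD : D ≠ 0) {W : WeierstrassCurve.Affine ℚ} {y : ℚ}
    (h : W.Nonsingular (X / D ^ 2) y) (hleg : legendreSym p (X - t₀ * D ^ 2) ≠ 0) :
    IsSquare (xSub (t : ℚ_[p]) (.some _ _ h)) ↔ legendreSym p (X - t₀ * D ^ 2) = 1 := by
  have hred : PadicInt.toZMod ((X : ℤ_[p]) - t * (D : ℤ_[p]) ^ 2) =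
      ((X - t₀ * D ^ 2 : ℤ) : ZMod p) := by
    simp [ht]
  have hval : xSub (t : ℚ_[p]) (.some _ _ h) * ((D : ℚ_[p]) * D) =
      (((X : ℤ_[p]) - t * (D : ℤ_[p]) ^ 2 : ℤ_[p]) : ℚ_[p]) := by
    have hD' : (D : ℚ_[p]) ≠ 0 := Int.cast_ne_zero.2 hD
    simp only [xSub, map_div₀, map_pow, map_intCast]
    push_cast
    field_simp
  have hne : ((X - t₀ * D ^ 2 : ℤ) : ZMod p) ≠ 0 := by rwa [Ne, ← legendreSym.eq_zero_iff]
  have hDsq : IsSquare ((D : ℚ_[p]) * D) := ⟨_, rfl⟩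
  have hD2 : (D : ℚ_[p]) * D ≠ 0 := mul_self_ne_zero.2 (Int.cast_ne_zero.2 hD)
  rw [legendreSym.eq_one_iff p hne, ← hred,
    ← isSquare_coe_iff_isSquare_toZMod hp (hred ▸ hne), ← hval]
  refine ⟨fun hs => hs.mul hDsq, fun hs => ?_⟩
  rw [← mul_div_cancel_right₀ (xSub (t : ℚ_[p]) _) hD2]
  exact hs.div hDsq

theorem exists_addSubgroup_mem_iff_legendreSym_eq_one (hp2 : p ≠ 2) (hp3 : p ≠ 3)
    (hb : ∀ x : ℚ, x ^ 3 + b ≠ 0) (hroot : (p : ℤ) ∣ t₀ ^ 3 + b) (ht₀ : ¬ (p : ℤ) ∣ t₀) :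
    ∃ H : AddSubgroup (mordellCurve (b : ℚ)).Point, (∀ P, P + P ∈ H) ∧
      ∀ (X D : ℤ) (y : ℚ) (h : (mordellCurve (b : ℚ)).Nonsingular (X / D ^ 2) y), D ≠ 0 →
        legendreSym p (X - t₀ * D ^ 2) ≠ 0 →
        (.some _ _ h ∈ H ↔ legendreSym p (X - t₀ * D ^ 2) = 1) := by
  obtain ⟨t, ht, htt₀⟩ := exists_padicInt_cube_root hp3 hroot ht₀
  have hcube : (t : ℚ_[p]) ^ 3 = -(b : ℚ_[p]) := by exact_mod_cast congrArg Subtype.val ht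
  have htroot : IsCubicRoot (mordellCurve (b : ℚ)) (t : ℚ_[p]) := by
    simp [isCubicRoot_mordellCurve_iff, hcube]
  have htℚ (x : ℚ) : algebraMap ℚ ℚ_[p] x ≠ t := fun hx => hb x <| by
    have : ((x ^ 3 + b : ℚ) : ℚ_[p]) = 0 := by
      push_cast
      rw [← eq_ratCast (algebraMap ℚ ℚ_[p]) x, hx, hcube, neg_add_cancel]
    exact_mod_cast this
  exact ⟨squareSubgroup htroot htℚ, isSquare_xSub_add_self htroot htℚ, fun X D y h hD hleg =>
    isSquare_xSub_iff_legendreSym_eq_one hp2 htt₀ hD h hleg⟩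

end Padic

section AdditionFormulas

variable {K : Type*} [Field K] [DecidableEq K] {b x y x₁ x₂ y₁ y₂ : K}

lemma mordellCurve_addX_of_X_ne (h₁ : (mordellCurve b).Equation x₁ y₁)
    (h₂ : (mordellCurve b).Equation x₂ y₂) (hx : x₁ ≠ x₂) :
    (mordellCurve b).addX x₁ x₂ ((mordellCurve b).slope x₁ x₂ y₁ y₂) =
      (x₁ * x₂ * (x₁ + x₂) + 2 * b - 2 * (y₁ * y₂)) / (x₁ - x₂) ^ 2 := by
  rw [mordellCurve_equation_iff] at h₁ h₂
  have hsub : x₁ - x₂ ≠ 0 := sub_ne_zero.2 hx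
  simp only [Affine.addX, Affine.slope_of_X_ne hx, a₁_of_isShortNF, a₂_of_isShortNF]
  field_simp
  linear_combination h₁ + h₂

lemma mordellCurve_addX_self (h : (mordellCurve b).Equation x y)
    (hy : y ≠ (mordellCurve b).negY x y) :
    (mordellCurve b).addX x x ((mordellCurve b).slope x x y y) =
      (x ^ 4 - 8 * b * x) / (2 * y) ^ 2 := by
  rw [mordellCurve_equation_iff] at h
  have h2y : 2 * y ≠ 0 := fun h0 => hy (by rw [negY_of_isCharNeTwoNF]; linear_combination h0)
  have hslope : (mordellCurve b).slope x x y y = 3 * x ^ 2 / (2 * y) := by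
    rw [Affine.slope_of_Y_ne rfl hy, negY_of_isCharNeTwoNF]
    simp [mordellCurve, two_mul]
  obtain ⟨h2, hy0⟩ := mul_ne_zero_iff.1 h2y
  simp only [Affine.addX, hslope, a₁_of_isShortNF, a₂_of_isShortNF]
  field_simp
  linear_combination -8 * x * h

end AdditionFormulas

section Height

/-- The point `P` has an abscissa `p / e²` with `|p|` and `e²` at most `H`. No coprimality is
asked of `p` and `e`, so that this only bounds the naive height of `P` from above. The point at
infinity satisfies this for every `H`. -/
def HeightLE {W : WeierstrassCurve.Affine ℚ} (P : W.Point) (H : ℚ) : Prop :=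
  match P with
  | .zero => True
  | .some x _ _ => ∃ p e : ℤ, e ≠ 0 ∧ x = p / e ^ 2 ∧ |(p : ℚ)| ≤ H ∧ (e : ℚ) ^ 2 ≤ H

lemma one_le_sq_cast {e : ℤ} (he : e ≠ 0) : (1 : ℚ) ≤ (e : ℚ) ^ 2 := by
  exact_mod_cast Int.add_one_le_iff.2 (sq_pos_of_ne_zero he)

lemma HeightLE.mono {W : WeierstrassCurve.Affine ℚ} {P : W.Point} {H H' : ℚ} (hP : HeightLE P H)
    (hH : H ≤ H') : HeightLE P H' := by
  cases P with
  | zero => trivial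
  | some x y h =>
    obtain ⟨p, e, he, hx, hp, heH⟩ := hP
    exact ⟨p, e, he, hx, hp.trans hH, heH.trans hH⟩

variable {b : ℤ} {H : ℚ}

lemma sq_le_of_sq_eq_cube_add {p e r : ℤ} (hr : r ^ 2 = p ^ 3 + b * e ^ 6) (hp : |(p : ℚ)| ≤ H)
    (he : (e : ℚ) ^ 2 ≤ H) : (r : ℚ) ^ 2 ≤ (1 + |(b : ℚ)|) * H ^ 3 := by
  have hpH : (p : ℚ) ^ 3 ≤ H ^ 3 :=
    (le_abs_self _).trans (by rw [abs_pow]; gcongr)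
  have heH : (b : ℚ) * (e ^ 2) ^ 3 ≤ |(b : ℚ)| * H ^ 3 := by
    gcongr
    exact le_abs_self _
  calc (r : ℚ) ^ 2 = p ^ 3 + b * (e ^ 2) ^ 3 := by rw [← pow_mul]; exact_mod_cast hr
    _ ≤ (1 + |(b : ℚ)|) * H ^ 3 := by linarith

lemma HeightLE.exists_num_den {x y : ℚ} {h : (mordellCurve (b : ℚ)).Nonsingular x y}
    (hP : HeightLE (.some x y h) H) : ∃ p r e : ℤ, e ≠ 0 ∧ x = p / e ^ 2 ∧ y = r / e ^ 3 ∧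
      |(p : ℚ)| ≤ H ∧ (e : ℚ) ^ 2 ≤ H ∧ (r : ℚ) ^ 2 ≤ (1 + |(b : ℚ)|) * H ^ 3 := by
  obtain ⟨p, e, he, rfl, hp, heH⟩ := hP
  have he' : (e : ℚ) ≠ 0 := Int.cast_ne_zero.2 he
  have hy := mordellCurve_equation_iff.1 h.1
  have hsq : (y * e ^ 3) ^ 2 = ((p ^ 3 + b * e ^ 6 : ℤ) : ℚ) := by
    rw [mul_pow, hy]
    push_cast
    field_simp
  obtain ⟨r, hr⟩ : ∃ r : ℤ, (r : ℚ) = y * e ^ 3 :=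
    IsIntegrallyClosed.exists_algebraMap_eq_of_isIntegral_pow two_pos
      (hsq ▸ isIntegral_algebraMap)
  rw [← hr] at hsq
  exact ⟨p, r, e, he, rfl, by rw [hr]; field_simp, hp, heH,
    sq_le_of_sq_eq_cube_add (by exact_mod_cast hsq) hp heH⟩

lemma abs_chord_num_le {p₁ p₂ r₁ r₂ e₁ e₂ b : ℚ} (hp₁ : |p₁| ≤ H) (hp₂ : |p₂| ≤ H)
    (he₁ : e₁ ^ 2 ≤ H) (he₂ : e₂ ^ 2 ≤ H) (hr₁ : r₁ ^ 2 ≤ (1 + |b|) * H ^ 3)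
    (hr₂ : r₂ ^ 2 ≤ (1 + |b|) * H ^ 3) :
    |p₁ * p₂ * (p₁ * e₂ ^ 2 + p₂ * e₁ ^ 2) + 2 * b * e₁ ^ 4 * e₂ ^ 4 - 2 * (r₁ * r₂ * (e₁ * e₂))|
      ≤ (4 + 4 * |b|) * H ^ 4 := by
  have hH : 0 ≤ H := (sq_nonneg e₁).trans he₁
  have hpp : |p₁ * p₂ * (p₁ * e₂ ^ 2 + p₂ * e₁ ^ 2)| ≤ H * H * (H * H + H * H) := by
    rw [abs_mul, abs_mul]
    gcongr
    refine (abs_add_le _ _).trans ?_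
    rw [abs_mul, abs_mul, abs_sq, abs_sq]
    gcongr
  have hee : |2 * b * e₁ ^ 4 * e₂ ^ 4| ≤ 2 * |b| * H ^ 2 * H ^ 2 := by
    rw [show 2 * b * e₁ ^ 4 * e₂ ^ 4 = 2 * b * (e₁ ^ 2) ^ 2 * (e₂ ^ 2) ^ 2 by ring, abs_mul,
      abs_mul, abs_mul, abs_sq, abs_sq, abs_two]
    gcongr
  have hrr : |r₁ * r₂ * (e₁ * e₂)| ≤ (1 + |b|) * H ^ 4 := by
    refine abs_le_of_sq_le_sq ?_ (by positivity)
    calc (r₁ * r₂ * (e₁ * e₂)) ^ 2 = r₁ ^ 2 * r₂ ^ 2 * (e₁ ^ 2 * e₂ ^ 2) := by ring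
      _ ≤ (1 + |b|) * H ^ 3 * ((1 + |b|) * H ^ 3) * (H * H) := by gcongr
      _ = ((1 + |b|) * H ^ 4) ^ 2 := by ring
  rw [abs_le] at hpp hee hrr ⊢
  constructor <;> nlinarith

lemma HeightLE.add_of_X_ne {x₁ x₂ y₁ y₂ : ℚ} {h₁ : (mordellCurve (b : ℚ)).Nonsingular x₁ y₁}
    {h₂ : (mordellCurve (b : ℚ)).Nonsingular x₂ y₂} (hP : HeightLE (.some x₁ y₁ h₁) H)
    (hQ : HeightLE (.some x₂ y₂ h₂) H) (hx : x₁ ≠ x₂) :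
    HeightLE (.some x₁ y₁ h₁ + .some x₂ y₂ h₂) ((4 + 8 * |(b : ℚ)|) * H ^ 4) := by
  obtain ⟨p₁, r₁, e₁, he₁, hx₁, hy₁, hp₁, heH₁, hr₁⟩ := hP.exists_num_den
  obtain ⟨p₂, r₂, e₂, he₂, hx₂, hy₂, hp₂, heH₂, hr₂⟩ := hQ.exists_num_den
  have he₁' : (e₁ : ℚ) ≠ 0 := Int.cast_ne_zero.2 he₁
  have he₂' : (e₂ : ℚ) ≠ 0 := Int.cast_ne_zero.2 he₂
  have hH : 0 ≤ H := (sq_nonneg _).trans heH₁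
  have hbH : 0 ≤ |(b : ℚ)| * H ^ 4 := by positivity
  have hw : (p₁ : ℚ) * e₂ ^ 2 - p₂ * e₁ ^ 2 ≠ 0 := by
    rwa [hx₁, hx₂, Ne, div_eq_div_iff (by positivity) (by positivity), ← sub_eq_zero] at hx
  have hwH : |(p₁ : ℚ) * e₂ ^ 2 - p₂ * e₁ ^ 2| ≤ H * H + H * H := by
    refine (abs_sub _ _).trans ?_
    rw [abs_mul, abs_mul, abs_sq, abs_sq]
    gcongr
  rw [Affine.Point.add_of_X_ne hx]
  refine ⟨p₁ * p₂ * (p₁ * e₂ ^ 2 + p₂ * e₁ ^ 2) + 2 * b * e₁ ^ 4 * e₂ ^ 4 -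
    2 * (r₁ * r₂ * (e₁ * e₂)), p₁ * e₂ ^ 2 - p₂ * e₁ ^ 2, by exact_mod_cast hw, ?_, ?_, ?_⟩
  · rw [mordellCurve_addX_of_X_ne h₁.1 h₂.1 hx, hx₁, hx₂, hy₁, hy₂,
      div_sub_div _ _ (by positivity) (by positivity), mul_comm ((e₁ : ℚ) ^ 2) (p₂ : ℚ)]
    push_cast
    field_simp
  · push_cast
    linarith [abs_chord_num_le hp₁ hp₂ heH₁ heH₂ hr₁ hr₂]
  · push_cast
    rw [← sq_abs]
    calc |(p₁ : ℚ) * e₂ ^ 2 - p₂ * e₁ ^ 2| ^ 2 ≤ (H * H + H * H) ^ 2 := by gcongr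
      _ ≤ (4 + 8 * |(b : ℚ)|) * H ^ 4 := by linarith

lemma HeightLE.add_self_of_Y_ne {x y : ℚ} {h : (mordellCurve (b : ℚ)).Nonsingular x y}
    (hP : HeightLE (.some x y h) H) (hy : y ≠ (mordellCurve (b : ℚ)).negY x y) :
    HeightLE (.some x y h + .some x y h) ((4 + 8 * |(b : ℚ)|) * H ^ 4) := by
  obtain ⟨p, r, e, he, hx, hyr, hp, heH, hr⟩ := hP.exists_num_den
  have hr0 : r ≠ 0 := by
    rintro rfl
    simp [hyr] at hy
  have he' : (e : ℚ) ≠ 0 := Int.cast_ne_zero.2 he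
  have hr' : (r : ℚ) ≠ 0 := Int.cast_ne_zero.2 hr0
  have hH : 0 ≤ H := (sq_nonneg _).trans heH
  have hH4 : 0 ≤ H ^ 4 := by positivity
  have hbH : 0 ≤ |(b : ℚ)| * H ^ 4 := by positivity
  rw [Affine.Point.add_self_of_Y_ne hy]
  refine ⟨p ^ 4 - 8 * b * p * e ^ 6, 2 * r * e, by simp [he, hr0], ?_, ?_, ?_⟩
  · rw [mordellCurve_addX_self h.1 hy, hx, hyr]
    push_cast
    field_simp
  · push_cast
    calc |(p : ℚ) ^ 4 - 8 * b * p * e ^ 6|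
        ≤ |(p : ℚ) ^ 4| + |8 * (b : ℚ) * p * e ^ 6| := abs_sub _ _
      _ = |(p : ℚ)| ^ 4 + 8 * |(b : ℚ)| * |(p : ℚ)| * (e ^ 2) ^ 3 := by
        simp only [abs_mul, abs_pow, Nat.abs_ofNat, ← sq_abs (e : ℚ), ← pow_mul]
      _ ≤ H ^ 4 + 8 * |(b : ℚ)| * H * H ^ 3 := by gcongr
      _ ≤ (4 + 8 * |(b : ℚ)|) * H ^ 4 := by linarith
  · push_cast
    calc (2 * (r : ℚ) * e) ^ 2 = 4 * r ^ 2 * e ^ 2 := by ring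
      _ ≤ 4 * ((1 + |(b : ℚ)|) * H ^ 3) * H := by gcongr
      _ ≤ (4 + 8 * |(b : ℚ)|) * H ^ 4 := by linarith

lemma HeightLE.self_le_mul_pow {W : WeierstrassCurve.Affine ℚ} {x y : ℚ} {h : W.Nonsingular x y}
    (hP : HeightLE (.some x y h) H) : H ≤ (4 + 8 * |(b : ℚ)|) * H ^ 4 := by
  obtain ⟨-, e, he, -, -, heH⟩ := hP
  have hH : 1 ≤ H := (one_le_sq_cast he).trans heH
  calc H ≤ H ^ 4 := le_self_pow₀ hH (by norm_num)
    _ ≤ (4 + 8 * |(b : ℚ)|) * H ^ 4 :=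
      le_mul_of_one_le_left (by positivity) (by linarith [abs_nonneg (b : ℚ)])

theorem HeightLE.add {P Q : (mordellCurve (b : ℚ)).Point} (hP : HeightLE P H)
    (hQ : HeightLE Q H) : HeightLE (P + Q) ((4 + 8 * |(b : ℚ)|) * H ^ 4) := by
  rcases P with _ | ⟨x₁, y₁, h₁⟩ <;> rcases Q with _ | ⟨x₂, y₂, h₂⟩
  · trivial
  · exact hQ.mono hQ.self_le_mul_pow
  · exact hP.mono hP.self_le_mul_pow
  by_cases hxy : x₁ = x₂ ∧ y₁ = (mordellCurve (b : ℚ)).negY x₂ y₂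
  · rw [Affine.Point.add_of_Y_eq hxy.1 hxy.2]
    trivial
  by_cases hx : x₁ = x₂
  · subst hx
    have hy : y₁ ≠ (mordellCurve (b : ℚ)).negY x₁ y₂ := fun h => hxy ⟨rfl, h⟩
    obtain rfl := Affine.Y_eq_of_Y_ne h₁.1 h₂.1 rfl hy
    exact hP.add_self_of_Y_ne hy
  · exact hP.add_of_X_ne hQ hx

end Height

section Sums

lemma list_sum_induction_of_length_le_two_pow {G : Type*} [AddMonoid G] {p : ℕ → G → Prop}
    (h0 : p 0 0) (hadd : ∀ m a b, p m a → p m b → p (m + 1) (a + b)) {m : ℕ} {l : List G}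
    (hl : ∀ a ∈ l, p 0 a) (hm : l.length ≤ 2 ^ m) : p m l.sum := by
  induction m generalizing l with
  | zero =>
    rcases l with _ | ⟨a, _ | ⟨b, l⟩⟩
    · exact h0
    · simpa using hl
    · simp at hm
  | succ m ih =>
    rw [← List.sum_take_add_sum_drop l (2 ^ m)]
    refine hadd m _ _ (ih (fun a ha => hl a (List.mem_of_mem_take ha)) ?_)
      (ih (fun a ha => hl a (List.mem_of_mem_drop ha)) ?_)
    · exact List.length_take_le _ _
    · rw [List.length_drop]
      omega

variable {b : ℤ} {A M : ℚ}

lemma heightLE_zero {W : WeierstrassCurve.Affine ℚ} (H : ℚ) : HeightLE (0 : W.Point) H :=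
  trivial

-- With `4 + 8|b| ≤ A³`, `HeightLE.add` turns a bound `H / A` into `H ^ 4 / A`, which iterates well.
lemma HeightLE.list_sum (hA : 0 < A) (hbA : 4 + 8 * |(b : ℚ)| ≤ A ^ 3) {m : ℕ}
    {l : List (mordellCurve (b : ℚ)).Point} (hl : ∀ P ∈ l, HeightLE P (M / A))
    (hm : l.length ≤ 2 ^ m) : HeightLE l.sum (M ^ 4 ^ m / A) := by
  refine list_sum_induction_of_length_le_two_pow (p := fun m P => HeightLE P (M ^ 4 ^ m / A))
    (heightLE_zero _) (fun m P Q hP hQ => (hP.add hQ).mono ?_) (by simpa using hl) hm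
  calc (4 + 8 * |(b : ℚ)|) * (M ^ 4 ^ m / A) ^ 4 ≤ A ^ 3 * (M ^ 4 ^ m / A) ^ 4 := by gcongr
    _ = M ^ 4 ^ (m + 1) / A := by
      rw [pow_succ 4 m, pow_mul]
      field_simp

variable {ι : Type*} [Fintype ι] {P : ι → (mordellCurve (b : ℚ)).Point}

lemma HeightLE.sum_nsmul (hA : 0 < A) (hbA : 4 + 8 * |(b : ℚ)| ≤ A ^ 3)
    (hP : ∀ i, HeightLE (P i) (M / A)) {c : ι → ℕ} {m : ℕ} (hc : ∑ i, c i ≤ 2 ^ m) :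
    HeightLE (∑ i, c i • P i) (M ^ 4 ^ m / A) := by
  set s : Multiset (mordellCurve (b : ℚ)).Point := ∑ i, Multiset.replicate (c i) (P i) with hs
  have hsum : s.toList.sum = ∑ i, c i • P i := by
    rw [Multiset.sum_toList, hs, Multiset.sum_sum]
    simp only [Multiset.sum_replicate]
  rw [← hsum]
  refine HeightLE.list_sum hA hbA (fun Q hQ => ?_) ?_
  · obtain ⟨i, -, hi⟩ := Multiset.mem_sum.1 (Multiset.mem_toList.1 hQ)
    rw [Multiset.eq_of_mem_replicate hi]
    exact hP i
  · rw [Multiset.length_toList, hs, Multiset.card_sum]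
    simpa only [Multiset.card_replicate] using hc

lemma injective_sum_nsmul {A : Type*} [AddCommGroup A] {P : ι → A}
    (hP : LinearIndependent ℤ P) : Function.Injective fun c : ι → ℕ => ∑ i, c i • P i :=
  (hP.restrict_scalars (R := ℕ) (by
    intro m n h
    simpa using h)).fintypeLinearCombination_injective

theorem exists_finset_card_eq_of_linearIndependent [Nonempty ι] (hP : LinearIndependent ℤ P)
    (hA : 0 < A) (hbA : 4 + 8 * |(b : ℚ)| ≤ A ^ 3) (hPM : ∀ i, HeightLE (P i) (M / A)) {N m : ℕ}
    (hN : Fintype.card ι * N ≤ 2 ^ m) :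
    ∃ S : Finset (mordellCurve (b : ℚ)).Point, S.card = N ^ Fintype.card ι ∧ 0 ∉ S ∧
      ∀ Q ∈ S, HeightLE Q (M ^ 4 ^ m / A) := by
  classical
  set box : Finset (ι → ℕ) := Fintype.piFinset fun _ => Finset.Icc 1 N
  have hbox {c} (hc : c ∈ box) (i : ι) : 1 ≤ c i ∧ c i ≤ N :=
    Finset.mem_Icc.1 (Fintype.mem_piFinset.1 hc i)
  have hinj := injective_sum_nsmul hP
  refine ⟨box.image fun c => ∑ i, c i • P i, ?_, ?_, ?_⟩
  · rw [Finset.card_image_of_injective _ hinj]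
    simp [box]
  · rw [Finset.mem_image]
    rintro ⟨c, hc, hsum⟩
    obtain ⟨i⟩ := ‹Nonempty ι›
    have hc0 : c = 0 := hinj (by simpa using hsum)
    simpa [hc0] using (hbox hc i).1
  · rw [Finset.forall_mem_image]
    intro c hc
    refine HeightLE.sum_nsmul hA hbA hPM (le_trans ?_ hN)
    simpa using Finset.sum_le_card_nsmul Finset.univ c N fun i _ => (hbox hc i).2

end Sums

section CubeSums

lemma finite_setOf_cube_add_cube_eq {m : ℤ} (hm : m ≠ 0) :
    {p : ℤ × ℤ | p.1 ^ 3 + p.2 ^ 3 = m}.Finite := by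
  refine ((Set.finite_Icc (-(2 * |m|)) (2 * |m|)).prod
    (Set.finite_Icc (-(2 * |m|)) (2 * |m|))).subset ?_
  rintro ⟨x, y⟩ (h : x ^ 3 + y ^ 3 = m)
  have hfactor : (x + y) * (x ^ 2 - x * y + y ^ 2) = m := by rw [← h]; ring
  have hquad : x ^ 2 - x * y + y ^ 2 ≤ |m| :=
    Int.le_of_dvd (abs_pos.2 hm) ((dvd_abs _ _).2 ⟨x + y, by rw [← hfactor, mul_comm]⟩)
  have hm1 : 1 ≤ |m| := Int.one_le_abs hm
  have hx : |x| ≤ 2 * |m| :=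
    abs_le_of_sq_le_sq (by nlinarith [sq_nonneg (x - 2 * y)]) (by positivity)
  have hy : |y| ≤ 2 * |m| :=
    abs_le_of_sq_le_sq (by nlinarith [sq_nonneg (2 * x - y)]) (by positivity)
  exact ⟨abs_le.1 hx, abs_le.1 hy⟩

lemma card_le_Nf {k D : ℤ} (hk : k ≠ 0) (hD : D ≠ 0) {T : Finset (ℚ × ℚ)}
    (hT : ∀ q ∈ T, q.1 ^ 3 + q.2 ^ 3 = k)
    (hint : ∀ q ∈ T, ∃ u v : ℤ, D * q.1 = u ∧ D * q.2 = v) : T.card ≤ Nf (k * D ^ 3) := by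
  have hfin := finite_setOf_cube_add_cube_eq (mul_ne_zero hk (pow_ne_zero 3 hD))
  have hD' : (D : ℚ) ≠ 0 := Int.cast_ne_zero.2 hD
  rw [← Set.ncard_coe_finset]
  refine (Set.ncard_le_ncard ?_ (hfin.image fun p => ((p.1 : ℚ) / D, (p.2 : ℚ) / D))).trans
    (Set.ncard_image_le hfin)
  intro q hq
  obtain ⟨u, v, hu, hv⟩ := hint q hq
  refine ⟨(u, v), ?_, ?_⟩
  · have hsum : (u : ℚ) ^ 3 + (v : ℚ) ^ 3 = k * D ^ 3 := by
      rw [← hu, ← hv, ← hT q hq]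
      ring
    exact_mod_cast hsum
  · simp only [← hu, ← hv]
    ext <;> field_simp

/-- The Mordell curve `y² = x³ - 432k²`, a Weierstrass model of the cubic `u³ + v³ = k`. -/
abbrev cubeSumCurve (k : ℤ) : WeierstrassCurve.Affine ℚ :=
  mordellCurve ((-432 * k ^ 2 : ℤ) : ℚ)

variable {k : ℤ}

lemma cubeSumCurve_equation_iff {x y : ℚ} :
    (cubeSumCurve k).Equation x y ↔ y ^ 2 = x ^ 3 - 432 * k ^ 2 := by
  rw [mordellCurve_equation_iff]
  push_cast
  rw [neg_mul, sub_eq_add_neg]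

lemma ne_zero_of_cubeSumCurve_equation (hk : k ≠ 0) {x y : ℚ}
    (h : (cubeSumCurve k).Equation x y) : x ≠ 0 := by
  rintro rfl
  rw [cubeSumCurve_equation_iff] at h
  have hk' : (0 : ℚ) < k ^ 2 := by positivity
  linarith [sq_nonneg y]

/-- The birational map from `y² = x³ - 432k²` to `u³ + v³ = k`. The point at infinity of the
Weierstrass curve corresponds to a point at infinity of the cubic and is sent to `(0, 0)`. -/
def toCubeSum (k : ℤ) : (cubeSumCurve k).Point → ℚ × ℚ
  | .zero => 0
  | .some x y _ => ((36 * k + y) / (6 * x), (36 * k - y) / (6 * x))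

lemma toCubeSum_cube_add_cube (hk : k ≠ 0) {P : (cubeSumCurve k).Point} (hP : P ≠ 0) :
    (toCubeSum k P).1 ^ 3 + (toCubeSum k P).2 ^ 3 = k := by
  rcases P with _ | ⟨x, y, h⟩
  · exact absurd rfl hP
  have hx := ne_zero_of_cubeSumCurve_equation hk h.1
  have hxy := cubeSumCurve_equation_iff.1 h.1
  simp only [toCubeSum]
  field_simp
  linear_combination 216 * k * hxy

lemma toCubeSum_injOn (hk : k ≠ 0) : Set.InjOn (toCubeSum k) {0}ᶜ := by
  rintro (_ | ⟨x₁, y₁, h₁⟩) hP (_ | ⟨x₂, y₂, h₂⟩) hQ h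
  · rfl
  · exact absurd rfl hP
  · exact absurd rfl hQ
  have hx₁ := ne_zero_of_cubeSumCurve_equation hk h₁.1
  have hx₂ := ne_zero_of_cubeSumCurve_equation hk h₂.1
  have hk' : (k : ℚ) ≠ 0 := Int.cast_ne_zero.2 hk
  obtain ⟨hu, hv⟩ := Prod.mk.inj h
  field_simp at hu hv
  obtain rfl : x₁ = x₂ := by
    refine mul_left_cancel₀ (mul_ne_zero (by norm_num : (72 : ℚ) ≠ 0) hk') ?_
    linear_combination -hu - hv
  obtain rfl : y₁ = y₂ := by
    refine mul_left_cancel₀ hx₁ ?_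
    linear_combination hu
  rfl

lemma HeightLE.exists_clear_denominators (hk : k ≠ 0) {P : (cubeSumCurve k).Point} {H : ℚ}
    (hP : HeightLE P H) (hP0 : P ≠ 0) : ∃ d : ℤ, 2 ≤ d ∧ (d : ℚ) ≤ 6 * H ^ 2 ∧
      ∃ u v : ℤ, d * (toCubeSum k P).1 = u ∧ d * (toCubeSum k P).2 = v := by
  rcases P with _ | ⟨x, y, h⟩
  · exact absurd rfl hP0
  have hx0 := ne_zero_of_cubeSumCurve_equation hk h.1
  obtain ⟨p, r, e, he, rfl, rfl, hp, heH, -⟩ := HeightLE.exists_num_den hP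
  have he' : (e : ℚ) ≠ 0 := Int.cast_ne_zero.2 he
  have hp' : (p : ℚ) ≠ 0 := fun h => hx0 (by rw [h, zero_div])
  have hpe : 0 < |p * e| := abs_pos.2 (mul_ne_zero (Int.cast_ne_zero.1 hp') he)
  refine ⟨6 * |p * e|, by omega, ?_, ?_⟩
  · push_cast
    have heH' : |(e : ℚ)| ≤ H := by
      refine le_trans ?_ heH
      rw [← sq_abs]
      exact le_self_pow₀ (by exact_mod_cast Int.one_le_abs he) two_ne_zero
    have hH : 0 ≤ H := (abs_nonneg _).trans hp
    rw [abs_mul, sq H]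
    gcongr
  · obtain ⟨s, hs⟩ : p * e ∣ |p * e| := self_dvd_abs _
    refine ⟨s * (36 * k * e ^ 3 + r), s * (36 * k * e ^ 3 - r), ?_, ?_⟩ <;>
    · rw [hs]
      simp only [toCubeSum]
      push_cast
      field_simp

theorem exists_card_le_Nf (hk : k ≠ 0) {H : ℚ} {S : Finset (cubeSumCurve k).Point} (h0 : 0 ∉ S)
    (hS : ∀ P ∈ S, HeightLE P H) : ∃ m : ℤ, S.card ≤ Nf m ∧ 2 ^ S.card ≤ |m| ∧
      (|m| : ℚ) ≤ |(k : ℚ)| * (6 * H ^ 2) ^ (3 * S.card) := by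
  classical
  have hne {P} (hP : P ∈ S) : P ≠ 0 := fun h => h0 (h ▸ hP)
  choose! d hd2 hdH hclear using fun P hP =>
    HeightLE.exists_clear_denominators hk (hS P hP) (hne hP)
  set D := ∏ P ∈ S, d P with hDdef
  have hDpow : 2 ^ S.card ≤ D := by
    rw [← Finset.prod_const]
    exact Finset.prod_le_prod (fun _ _ => by norm_num) hd2
  have hD : 1 ≤ D := (one_le_pow₀ (by norm_num)).trans hDpow
  have hDH : (D : ℚ) ≤ (6 * H ^ 2) ^ S.card := by
    rw [hDdef, Int.cast_prod, ← Finset.prod_const]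
    have hd0 (P) (hP : P ∈ S) : 0 ≤ (d P : ℚ) := Int.cast_nonneg (by linarith [hd2 P hP])
    exact Finset.prod_le_prod hd0 hdH
  refine ⟨k * D ^ 3, ?_, ?_, ?_⟩
  · rw [← Finset.card_image_of_injOn ((toCubeSum_injOn hk).mono fun P hP => hne hP)]
    refine card_le_Nf hk (by omega) (Finset.forall_mem_image.2 fun P hP =>
      toCubeSum_cube_add_cube hk (hne hP)) (Finset.forall_mem_image.2 fun P hP => ?_)
    obtain ⟨u, v, hu, hv⟩ := hclear P hP
    obtain ⟨c, hc⟩ := Finset.dvd_prod_of_mem d hP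
    refine ⟨c * u, c * v, ?_, ?_⟩
    · rw [hDdef, hc]
      push_cast
      linear_combination (c : ℚ) * hu
    · rw [hDdef, hc]
      push_cast
      linear_combination (c : ℚ) * hv
  · rw [abs_mul, abs_of_pos (by positivity : 0 < D ^ 3)]
    calc 2 ^ S.card ≤ D := hDpow
      _ ≤ D ^ 3 := le_self_pow₀ hD (by norm_num)
      _ ≤ |k| * D ^ 3 := le_mul_of_one_le_left (by positivity) (Int.one_le_abs hk)
  · push_cast
    rw [abs_mul, abs_of_nonneg (by positivity : (0 : ℚ) ≤ (D : ℚ) ^ 3), mul_comm 3, pow_mul]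
    gcongr

end CubeSums

section LowerBound

lemma rpow_div_le_pow {x y : ℝ} (hx : 0 ≤ x) (hy : 0 ≤ y) {a n : ℕ} (hn : n ≠ 0) (h : x ≤ y ^ n) :
    x ^ ((a : ℝ) / n) ≤ y ^ a := by
  calc x ^ ((a : ℝ) / n) ≤ (y ^ n) ^ ((a : ℝ) / n) := Real.rpow_le_rpow hx h (by positivity)
    _ = y ^ a := by
      rw [← Real.rpow_natCast y n, ← Real.rpow_mul hy, mul_div_cancel₀ _ (by positivity),
        Real.rpow_natCast]

variable {k : ℤ} {A M : ℚ} {ι : Type*} [Fintype ι] [Nonempty ι] {P : ι → (cubeSumCurve k).Point}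

lemma six_le_sq_of_le_cube (hk : k ≠ 0) (hA : 0 < A)
    (hkA : 4 + 8 * |((-432 * k ^ 2 : ℤ) : ℚ)| ≤ A ^ 3) : 6 ≤ A ^ 2 := by
  have hk1 : (1 : ℚ) ≤ k ^ 2 := one_le_sq_cast hk
  have hA3 : (3 : ℚ) ^ 3 ≤ A ^ 3 := by
    refine le_trans ?_ hkA
    push_cast
    rw [neg_mul, abs_neg, abs_of_nonneg (by positivity)]
    linarith
  have h3A : 3 ≤ A := (pow_le_pow_iff_left₀ (by norm_num) hA.le (by norm_num)).1 hA3
  nlinarith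

theorem exists_log_le_of_linearIndependent (hk : k ≠ 0) (hP : LinearIndependent ℤ P) (hA : 0 < A)
    (hkA : 4 + 8 * |((-432 * k ^ 2 : ℤ) : ℚ)| ≤ A ^ 3) (hM : 1 ≤ M)
    (hPM : ∀ i, HeightLE (P i) (M / A)) {a : ℕ} (ha : Fintype.card ι ≤ 2 ^ a) (K : ℕ) :
    ∃ m : ℤ, (2 ^ K) ^ Fintype.card ι ≤ Nf m ∧ 2 ^ (2 ^ K) ^ Fintype.card ι ≤ |m| ∧
      Real.log |(m : ℝ)| ≤ Real.log |(k : ℝ)| +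
        6 * 4 ^ a * Real.log M * (2 ^ K) ^ (Fintype.card ι + 2) := by
  obtain ⟨S, hcard, h0, hS⟩ := exists_finset_card_eq_of_linearIndependent hP hA hkA hPM
    (N := 2 ^ K) (m := K + a) (by rw [pow_add, mul_comm]; gcongr)
  obtain ⟨m, hNf, hlow, hup⟩ := exists_card_le_Nf hk h0 hS
  rw [hcard] at hNf hlow hup
  refine ⟨m, hNf, hlow, ?_⟩
  have hH : 6 * (M ^ 4 ^ (K + a) / A) ^ 2 ≤ M ^ (2 * 4 ^ (K + a)) := by
    rw [div_pow, ← mul_div_assoc, div_le_iff₀ (by positivity), ← pow_mul, mul_comm 6,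
      mul_comm 2]
    gcongr
    exact six_le_sq_of_le_cube hk hA hkA
  have hm0 : 0 < |(m : ℝ)| := by
    have : 0 < |m| := lt_of_lt_of_le (by positivity) hlow
    exact_mod_cast this
  have hupM : |(m : ℝ)| ≤
      |(k : ℝ)| * ((M : ℝ) ^ (2 * 4 ^ (K + a))) ^ (3 * (2 ^ K) ^ Fintype.card ι) := by
    have : |(m : ℚ)| ≤ |(k : ℚ)| * (M ^ (2 * 4 ^ (K + a))) ^ (3 * (2 ^ K) ^ Fintype.card ι) :=
      hup.trans (by gcongr)
    exact_mod_cast this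
  have : (0 : ℝ) < M := by exact_mod_cast one_pos.trans_le hM
  have hk0 : |(k : ℝ)| ≠ 0 := abs_ne_zero.2 (Int.cast_ne_zero.2 hk)
  calc Real.log |(m : ℝ)|
      ≤ Real.log (|(k : ℝ)| * ((M : ℝ) ^ (2 * 4 ^ (K + a))) ^ (3 * (2 ^ K) ^ Fintype.card ι)) :=
        Real.log_le_log hm0 hupM
    _ = _ := by
        have h4 : (4 : ℝ) ^ K = (2 ^ K) ^ 2 := by
          rw [← pow_mul, mul_comm, pow_mul]
          norm_num
        rw [Real.log_mul hk0 (by positivity), Real.log_pow, Real.log_pow]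
        push_cast
        rw [pow_add 4, h4]
        ring

theorem exists_log_rpow_le_mul_Nf (hk : k ≠ 0) (hP : LinearIndependent ℤ P) (hA : 0 < A)
    (hkA : 4 + 8 * |((-432 * k ^ 2 : ℤ) : ℚ)| ≤ A ^ 3) (hM : 1 ≤ M)
    (hPM : ∀ i, HeightLE (P i) (M / A)) {a : ℕ} (ha : Fintype.card ι ≤ 2 ^ a) {c : ℝ} (hc : 0 ≤ c)
    (hkM : Real.log |(k : ℝ)| + 6 * 4 ^ a * Real.log M ≤ c ^ (Fintype.card ι + 2)) (B : ℝ) :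
    ∃ m : ℤ, B < |(m : ℝ)| ∧ 1 ≤ Nf m ∧
      Real.log |(m : ℝ)| ^ ((Fintype.card ι : ℝ) / (Fintype.card ι + 2 : ℕ)) ≤
        c ^ Fintype.card ι * Nf m := by
  set r := Fintype.card ι
  obtain ⟨K, hK⟩ := exists_nat_gt B
  obtain ⟨m, hNf, hlow, hlog⟩ := exists_log_le_of_linearIndependent hk hP hA hkA hM hPM ha K
  have hm : (2 : ℝ) ^ (2 ^ K) ^ r ≤ |(m : ℝ)| := by exact_mod_cast hlow
  have hKr : K ≤ 2 ^ (2 ^ K) ^ r := by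
    have hr0 : r ≠ 0 := Fintype.card_ne_zero
    calc K ≤ 2 ^ K := Nat.lt_two_pow_self.le
      _ ≤ (2 ^ K) ^ r := Nat.le_self_pow hr0 _
      _ ≤ 2 ^ (2 ^ K) ^ r := Nat.lt_two_pow_self.le
  refine ⟨m, ?_, (Nat.one_le_pow _ _ (by positivity)).trans hNf, ?_⟩
  · calc B < K := hK
      _ ≤ (2 : ℝ) ^ (2 ^ K) ^ r := by exact_mod_cast hKr
      _ ≤ |(m : ℝ)| := hm
  have hlog' : Real.log |(m : ℝ)| ≤ (c * 2 ^ K) ^ (r + 2) := by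
    have hN : (1 : ℝ) ≤ (2 ^ K) ^ (r + 2) := one_le_pow₀ (one_le_pow₀ (by norm_num))
    have hk0 : 0 ≤ Real.log |(k : ℝ)| :=
      Real.log_nonneg (by exact_mod_cast Int.one_le_abs hk)
    rw [mul_pow]
    calc _ ≤ _ := hlog
      _ ≤ (Real.log |(k : ℝ)| + 6 * 4 ^ a * Real.log M) * (2 ^ K) ^ (r + 2) := by
        rw [add_mul]
        gcongr
        exact le_mul_of_one_le_right hk0 hN
      _ ≤ _ := by gcongr
  calc _ ≤ (c * 2 ^ K) ^ r :=
        rpow_div_le_pow (Real.log_nonneg ((one_le_pow₀ (by norm_num)).trans hm)) (by positivity)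
          (by omega) hlog'
    _ = c ^ r * (2 ^ K) ^ r := mul_pow _ _ _
    _ ≤ c ^ r * Nf m := by
      gcongr
      exact_mod_cast hNf

end LowerBound

section ElkiesRogers

/-- The integer `k` for which Elkies and Rogers found eleven independent points on
`u³ + v³ = k`. -/
def elkiesRogersK : ℤ := 13293998056584952174157235

/-- `elkiesRogersX i / elkiesRogersD i ^ 2` is the abscissa of the `i`-th of eleven points on
`y² = x³ - 432k²`, where `k = elkiesRogersK`. -/
def elkiesRogersX : Fin 11 → ℤ := ![
  452996184606704284,
  581929399384268884,
  1081467578421064324,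
  3872813842845512929,
  14223977941223185681,
  23642591593617729121,
  60754162712252641996,
  186947444570606201329,
  529039483652343874084,
  953791970202901740001,
  119330278066293515680489]

/-- `elkiesRogersY i / elkiesRogersD i ^ 3` is the ordinate of the `i`-th of the eleven points. -/
def elkiesRogersY : Fin 11 → ℤ := ![
  128879021298074168778095348,
  347445115527184289971582148,
  1090186592198757806762218468,
  7293893419137364085563841233,
  53644579362499981511120627071,
  98252123534609206746112661231,
  298317722774360709046010664644,
  2529513158175975931208754745967,
  11694736637462520801576013542148,
  6687030072821163200779849829351,
  36104560562310529545792373063330187]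

/-- The denominators in the coordinates of the eleven points. -/
def elkiesRogersD : Fin 11 → ℤ := ![1, 1, 1, 2, 1, 6, 11, 11, 23, 47, 416]

/-- Primes `p` modulo which `432k²` is a cube, found by search: the `2`-descent character at the
`i`-th prime is `-1` on the `i`-th of the eleven points and `1` on all the others. -/
def descentPrime : Fin 11 → ℕ :=
  ![35129, 139457, 6653, 36791, 39227, 227, 13499, 11519, 4421, 977, 9461]

/-- Cube roots of `432k²` modulo the primes `descentPrime`. -/
def descentRoot : Fin 11 → ℤ :=
  ![29603, 107045, 5067, 4658, 29663, 44, 12465, 7333, 1440, 551, 5126]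

lemma elkiesRogersK_ne_zero : elkiesRogersK ≠ 0 := by
  norm_num [elkiesRogersK]

lemma elkiesRogersD_ne_zero (i : Fin 11) : elkiesRogersD i ≠ 0 := by
  fin_cases i <;> simp [elkiesRogersD]

lemma elkiesRogersY_sq (i : Fin 11) : elkiesRogersY i ^ 2 =
    elkiesRogersX i ^ 3 - 432 * elkiesRogersK ^ 2 * elkiesRogersD i ^ 6 := by
  fin_cases i <;> norm_num [elkiesRogersX, elkiesRogersY, elkiesRogersD, elkiesRogersK]

lemma nonsingular_elkiesRogers (i : Fin 11) : (cubeSumCurve elkiesRogersK).Nonsingular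
    (elkiesRogersX i / elkiesRogersD i ^ 2) (elkiesRogersY i / elkiesRogersD i ^ 3) := by
  have hD : (elkiesRogersD i : ℚ) ≠ 0 := Int.cast_ne_zero.2 (elkiesRogersD_ne_zero i)
  have hY : (elkiesRogersY i : ℚ) ^ 2 =
      elkiesRogersX i ^ 3 - 432 * elkiesRogersK ^ 2 * elkiesRogersD i ^ 6 := by
    exact_mod_cast elkiesRogersY_sq i
  refine mordellCurve_nonsingular (by norm_num) (by norm_num [elkiesRogersK]) ?_
  rw [div_pow, div_pow, hY]
  push_cast
  field_simp
  ring

/-- The eleven points of Elkies and Rogers, moved to the Weierstrass model of `u³ + v³ = k`. -/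
def elkiesRogersPoint (i : Fin 11) : (cubeSumCurve elkiesRogersK).Point :=
  .some _ _ (nonsingular_elkiesRogers i)

lemma prime_descentPrime (i : Fin 11) : (descentPrime i).Prime := by
  fin_cases i <;> norm_num [descentPrime]

lemma descentPrime_dvd (i : Fin 11) :
    (descentPrime i : ℤ) ∣ descentRoot i ^ 3 + -432 * elkiesRogersK ^ 2 := by
  fin_cases i <;> norm_num [descentPrime, descentRoot, elkiesRogersK]

lemma not_descentPrime_dvd_descentRoot (i : Fin 11) : ¬ (descentPrime i : ℤ) ∣ descentRoot i := by
  fin_cases i <;> norm_num [descentPrime, descentRoot]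

lemma three_lt_descentPrime (i : Fin 11) : 3 < descentPrime i := by
  fin_cases i <;> norm_num [descentPrime]

lemma legendreSym_elkiesRogers (i j : Fin 11) [Fact (descentPrime i).Prime] :
    legendreSym (descentPrime i) (elkiesRogersX j - descentRoot i * elkiesRogersD j ^ 2) =
      if i = j then -1 else 1 := by
  rw [jacobiSym.legendreSym.to_jacobiSym]
  fin_cases i <;> fin_cases j <;>
    simp only [descentPrime, descentRoot, elkiesRogersX, elkiesRogersD] <;>
    norm_num [Matrix.cons_val]

lemma cube_add_elkiesRogers_ne_zero (x : ℚ) :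
    x ^ 3 + ((-432 * elkiesRogersK ^ 2 : ℤ) : ℚ) ≠ 0 := by
  intro h
  obtain ⟨y, rfl⟩ : ∃ y : ℤ, algebraMap ℤ ℚ y = x :=
    IsIntegrallyClosed.exists_algebraMap_eq_of_isIntegral_pow (n := 3) (by norm_num) (by
      rw [eq_neg_of_add_eq_zero_left h, ← Int.cast_neg]
      exact isIntegral_algebraMap)
  have hy : y ^ 3 = 432 * elkiesRogersK ^ 2 := by
    rw [eq_intCast, ← Int.cast_pow, ← Int.cast_add, Int.cast_eq_zero] at h
    linarith
  have h5 : (5 : ℤ) ∣ y :=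
    Int.Prime.dvd_pow' (by norm_num) (k := 3) (by rw [hy]; norm_num [elkiesRogersK])
  have h125 : (5 : ℤ) ^ 3 ∣ 432 * elkiesRogersK ^ 2 := hy ▸ pow_dvd_pow_of_dvd h5 3
  norm_num [elkiesRogersK] at h125

theorem linearIndependent_elkiesRogersPoint : LinearIndependent ℤ elkiesRogersPoint := by
  have hprime (i : Fin 11) : Fact (descentPrime i).Prime := ⟨prime_descentPrime i⟩
  choose H hdouble hmem using fun i => exists_addSubgroup_mem_iff_legendreSym_eq_one
    (by linarith [three_lt_descentPrime i] : descentPrime i ≠ 2) (three_lt_descentPrime i).ne'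
    cube_add_elkiesRogers_ne_zero (descentPrime_dvd i) (not_descentPrime_dvd_descentRoot i)
  have hmem_iff (i j : Fin 11) : elkiesRogersPoint j ∈ H i ↔ j ≠ i := by
    rw [elkiesRogersPoint, hmem i _ _ _ _ (elkiesRogersD_ne_zero j), legendreSym_elkiesRogers]
    · split_ifs with h <;> simp [h, eq_comm]
    · rw [legendreSym_elkiesRogers]
      split_ifs <;> norm_num
  refine linearIndependent_of_mem_of_notMem (fun P hP => eq_zero_of_add_self_eq_zero two_ne_zero
    (fun x => ?_) hP) hdouble (fun i => ?_) fun i j hij => (hmem_iff i j).2 hij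
  · simpa [mordellCurve] using cube_add_elkiesRogers_ne_zero x
  · simp [hmem_iff]

lemma heightLE_elkiesRogersPoint (i : Fin 11) :
    HeightLE (elkiesRogersPoint i) (10 ^ 42 / 10 ^ 18) := by
  refine ⟨elkiesRogersX i, elkiesRogersD i, elkiesRogersD_ne_zero i, rfl, ?_, ?_⟩ <;>
    fin_cases i <;> norm_num [elkiesRogersX, elkiesRogersD]

end ElkiesRogers

lemma log_ten_le_three : Real.log 10 ≤ 3 := by
  calc Real.log 10 ≤ Real.log (2 ^ 4) := Real.log_le_log (by norm_num) (by norm_num)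
    _ = 4 * Real.log 2 := by simp [Real.log_pow]
    _ ≤ 3 := by linarith [Real.log_two_lt_d9]

lemma log_elkiesRogersK_le : Real.log |(elkiesRogersK : ℝ)| ≤ 78 := by
  calc Real.log |(elkiesRogersK : ℝ)| ≤ Real.log (10 ^ 26) := by
        refine Real.log_le_log ?_ ?_ <;> norm_num [elkiesRogersK]
    _ = 26 * Real.log 10 := by simp [Real.log_pow]
    _ ≤ 78 := by linarith [log_ten_le_three]

theorem stmt_1 : ∀ B : ℝ, ∃ m : ℤ, B < |(m : ℝ)| ∧
    4.2e-6 * Real.log |(m : ℝ)| ^ ((11 : ℝ) / 13) < (Nf m : ℝ) := by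
  intro B
  have hA : 4 + 8 * |((-432 * elkiesRogersK ^ 2 : ℤ) : ℚ)| ≤ (10 ^ 18) ^ 3 := by
    norm_num [elkiesRogersK]
  have hconst : Real.log |(elkiesRogersK : ℝ)| + 6 * 4 ^ 4 * Real.log ((10 ^ 42 : ℚ) : ℝ) ≤
      3 ^ (Fintype.card (Fin 11) + 2) := by
    push_cast
    rw [Real.log_pow, Fintype.card_fin]
    push_cast
    linarith [log_elkiesRogersK_le, log_ten_le_three]
  obtain ⟨m, hBm, hNf, hlog⟩ := exists_log_rpow_le_mul_Nf elkiesRogersK_ne_zero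
    linearIndependent_elkiesRogersPoint (by norm_num) hA (by norm_num) heightLE_elkiesRogersPoint
    (a := 4) (by norm_num) (by norm_num) hconst B
  refine ⟨m, hBm, ?_⟩
  have hlog' : Real.log |(m : ℝ)| ^ ((11 : ℝ) / 13) ≤ 3 ^ 11 * Nf m := by
    simpa only [Fintype.card_fin] using mod_cast hlog
  have hNf' : (1 : ℝ) ≤ Nf m := Nat.one_le_cast.2 hNf
  linarith
end
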